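/- arXiv:1802.10385 — 2 statements merged into one kernel-verified Lean document; each statement's English description precedes it below -/
import Mathlib

section
/- Let R be a commutative Artinian ring and let B and A be Artin R-algebras such that B is representation-finite, and let φ : B → A be an R-algebra homomorphism preserving identities. If the relative finitistic dimension of φ is at most 1 (that is, every finitely generated left A-module X of finite projective dimension admits an (A,B)-exact sequence 0 → P₁ → P₀ → X → 0 with P₀ and P₁ (A,B)-projective), then the finitistic dimension of A is finite. -/
universe u

open TensorProduct

section Basic

variable (Λ : Type u) [Ring Λ]

/-- `ProjDimLE Λ n M` : the module `M` admits a projective resolution of length `≤ n`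
by finitely generated projective `Λ`-modules. -/
def ProjDimLE : ℕ → ModuleCat.{u} Λ → Prop
  | 0, M => Module.Projective Λ M
  | n + 1, M => ∃ (P : ModuleCat.{u} Λ) (g : P →ₗ[Λ] M),
      Module.Projective Λ P ∧ Module.Finite Λ P ∧ Function.Surjective g ∧
      ProjDimLE n (ModuleCat.of Λ (LinearMap.ker g))

/-- The finitistic dimension of `Λ` (computed on finitely generated modules) is finite. -/
def FinFinDim : Prop :=
  ∃ n : ℕ, ∀ M : ModuleCat.{u} Λ, Module.Finite Λ M →
    (∃ k : ℕ, ProjDimLE Λ k M) → ProjDimLE Λ n M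

/-- A module is indecomposable. -/
def ModIndec (M : ModuleCat.{u} Λ) : Prop :=
  Nontrivial M ∧ ∀ N₁ N₂ : Submodule Λ M, IsCompl N₁ N₂ → N₁ = ⊥ ∨ N₂ = ⊥

/-- A class of modules has only finitely many isomorphism classes of indecomposables. -/
def ClassRepFinite (C : ModuleCat.{u} Λ → Prop) : Prop :=
  ∃ (k : ℕ) (N : Fin k → ModuleCat.{u} Λ),
    ∀ M : ModuleCat.{u} Λ, C M → ModIndec Λ M → ∃ i, Nonempty (M ≃ₗ[Λ] N i)

/-- `Λ` is representation-finite. -/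
def RepFinite : Prop :=
  ClassRepFinite Λ (fun M => Module.Finite Λ M)

/-- `X` belongs to `add N`: it is a direct summand of a finite direct sum of copies of `N`. -/
def InAdd (N X : ModuleCat.{u} Λ) : Prop :=
  ∃ (k : ℕ) (i : X →ₗ[Λ] (Fin k → N)) (p : (Fin k → N) →ₗ[Λ] X),
    p.comp i = LinearMap.id

/-- A submodule is superfluous (small). -/
def IsSuperfluous {M : ModuleCat.{u} Λ} (N : Submodule Λ M) : Prop :=
  ∀ L : Submodule Λ M, L ⊔ N = ⊤ → L = ⊤

/-- `K` is (isomorphic to) the kernel of a projective cover of `M`, i.e. a first syzygy. -/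
def IsSyzygyOf (K M : ModuleCat.{u} Λ) : Prop :=
  ∃ (P : ModuleCat.{u} Λ) (g : P →ₗ[Λ] M), Module.Projective Λ P ∧ Module.Finite Λ P ∧
    Function.Surjective g ∧ IsSuperfluous Λ (LinearMap.ker g) ∧
    Nonempty (K ≃ₗ[Λ] LinearMap.ker g)

/-- `K` is an `n`-th syzygy of `M`. -/
def IsNthSyzygy : ℕ → ModuleCat.{u} Λ → ModuleCat.{u} Λ → Prop
  | 0, K, M => Nonempty (K ≃ₗ[Λ] M)
  | n + 1, K, M => ∃ K' : ModuleCat.{u} Λ, IsNthSyzygy n K' M ∧ IsSyzygyOf Λ K K'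

/-- A class `C` of modules is `m`-syzygy-finite. -/
def MSyzygyFiniteClass (m : ℕ) (C : ModuleCat.{u} Λ → Prop) : Prop :=
  ∃ N : ModuleCat.{u} Λ, Module.Finite Λ N ∧
    ∀ X, C X → ∀ K, IsNthSyzygy Λ m K X → InAdd Λ N K

/-- A class `C` of modules is syzygy-finite. -/
def SyzygyFiniteClass (C : ModuleCat.{u} Λ → Prop) : Prop :=
  ∃ m : ℕ, MSyzygyFiniteClass Λ m C

/-- `Λ` is 1-syzygy-finite. -/
def OneSyzygyFinite : Prop :=
  MSyzygyFiniteClass Λ 1 (fun X => Module.Finite Λ X)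

/-- `Λ` is syzygy-finite. -/
def AlgSyzygyFinite : Prop :=
  SyzygyFiniteClass Λ (fun X => Module.Finite Λ X)

/-- The Jacobson radical of `Λ` (intersection of the maximal left ideals). -/
def jacobsonRad : Ideal Λ := sInf {I : Ideal Λ | I.IsMaximal}

end Basic

/-- The Jacobson radical of a subalgebra, as a subset of the ambient algebra. -/
def radSet {R A : Type u} [CommRing R] [Ring A] [Algebra R A] (S : Subalgebra R A) : Set A :=
  Subtype.val '' ((jacobsonRad ↥S : Ideal ↥S) : Set ↥S)

section Rel

variable {R : Type u} [CommRing R] {B A : Type u} [Ring B] [Ring A]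
  [Algebra R B] [Algebra R A] (φ : B →ₐ[R] A)

/-- The tensor product `A ⊗_B X` of the (A,B)-bimodule `A` with a left `A`-module `X`
(viewed as a `B`-module via `φ`), realized as a quotient of `A ⊗_R X`. -/
noncomputable def relTensor (X : ModuleCat.{u} A) : ModuleCat.{u} A :=
  letI : Module R X := Module.compHom X (algebraMap R A)
  ModuleCat.of A ((A ⊗[R] X) ⧸ Submodule.span A
    {z : A ⊗[R] X | ∃ (a : A) (b : B) (x : X),
      z = (a * φ b) ⊗ₜ[R] x - a ⊗ₜ[R] (φ b • x)})

/-- `X` is `(A,B)`-projective: a direct summand of `A ⊗_B X`. -/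
noncomputable def RelProjective (X : ModuleCat.{u} A) : Prop :=
  ∃ (i : X →ₗ[A] relTensor φ X) (p : relTensor φ X →ₗ[A] X), p.comp i = LinearMap.id

/-- The map `g` admits a `B`-linear map `h` with `g ∘ h ∘ g = g`
(this encodes `(A,B)`-exactness of the corresponding short exact sequence). -/
def RelSplitB {P X : ModuleCat.{u} A} (g : P →ₗ[A] X) : Prop :=
  ∃ h : X →+ P, (∀ (b : B) (x : X), h (φ b • x) = φ b • h x) ∧
    ∀ p : P, g (h (g p)) = g p

/-- `RelProjDimLE φ n X` : `X` has an `(A,B)`-exact resolution of length `≤ n` by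
finitely generated `(A,B)`-projective modules, i.e. relative projective dimension `≤ n`. -/
noncomputable def RelProjDimLE : ℕ → ModuleCat.{u} A → Prop
  | 0, X => RelProjective φ X
  | n + 1, X => ∃ (P : ModuleCat.{u} A) (g : P →ₗ[A] X),
      RelProjective φ P ∧ Module.Finite A P ∧ Function.Surjective g ∧ RelSplitB φ g ∧
      RelProjDimLE n (ModuleCat.of A (LinearMap.ker g))

/-- Restriction of scalars along `φ` of an `A`-module, as an object of `ModuleCat B`. -/
def resMod (X : ModuleCat.{u} A) : ModuleCat.{u} B :=
  @ModuleCat.of B _ X _ (Module.compHom X φ.toRingHom)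

/-- The right `B`-module structure on `A` induced by `φ`. -/
def rightModB : Module Bᵐᵒᵖ A :=
  Module.compHom A (RingHom.op φ.toRingHom)

end Rel

section ProjectiveDimension

open CategoryTheory Abelian

variable {A : Type u} [Ring A]
variable {K M X Y : Type u} [AddCommGroup K] [Module A K] [AddCommGroup M] [Module A M]
  [AddCommGroup X] [Module A X] [AddCommGroup Y] [Module A Y]

variable (A) in
/-- The projective dimension of `M` is less than `n`. -/
abbrev PdLT (M : Type u) [AddCommGroup M] [Module A M] (n : ℕ) : Prop :=
  HasProjectiveDimensionLT (ModuleCat.of A M) n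

/-- The short complex attached to a pair of composable linear maps which is exact. -/
abbrev shortComplexOfExact (i : K →ₗ[A] M) (p : M →ₗ[A] X) (h : Function.Exact i p) :
    ShortComplex (ModuleCat.{u} A) :=
  ShortComplex.mk (ModuleCat.ofHom i) (ModuleCat.ofHom p) (by
    ext x
    exact h.apply_apply_eq_zero x)

lemma shortComplexOfExact_shortExact {i : K →ₗ[A] M} {p : M →ₗ[A] X} (hi : Function.Injective i)
    (h : Function.Exact i p) (hp : Function.Surjective p) :
    (shortComplexOfExact i p h).ShortExact :=
  ModuleCat.shortComplex_shortExact _ h hi hp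

lemma PdLT.mono {m n : ℕ} (h : PdLT A M m) (hmn : m ≤ n) : PdLT A M n :=
  hasProjectiveDimensionLT_of_ge _ m n hmn

lemma pdLT_one_iff : PdLT A M 1 ↔ Module.Projective A M := by
  rw [IsProjective.iff_projective, projective_iff_hasProjectiveDimensionLT_one]

lemma PdLT.of_retract {n : ℕ} (h : PdLT A M n) (i : X →ₗ[A] M) (p : M →ₗ[A] X)
    (hpi : p ∘ₗ i = LinearMap.id) : PdLT A X n := by
  let r : Retract (ModuleCat.of A X) (ModuleCat.of A M) :=
    ⟨ModuleCat.ofHom i, ModuleCat.ofHom p, by rw [← ModuleCat.ofHom_comp, hpi]; rfl⟩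
  exact r.hasProjectiveDimensionLT n

lemma PdLT.of_equiv {n : ℕ} (h : PdLT A M n) (e : M ≃ₗ[A] X) : PdLT A X n :=
  h.of_retract e.symm.toLinearMap e.toLinearMap (by ext; simp)

lemma PdLT.of_exact_right {n : ℕ} {i : K →ₗ[A] M} {p : M →ₗ[A] X} (hi : Function.Injective i)
    (h : Function.Exact i p) (hp : Function.Surjective p) (hK : PdLT A K n)
    (hM : PdLT A M (n + 1)) : PdLT A X (n + 1) :=
  (shortComplexOfExact_shortExact hi h hp).hasProjectiveDimensionLT_X₃ n hK hM

lemma PdLT.of_exact_left {n : ℕ} {i : K →ₗ[A] M} {p : M →ₗ[A] X} (hi : Function.Injective i)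
    (h : Function.Exact i p) (hp : Function.Surjective p) (hM : PdLT A M n)
    (hX : PdLT A X (n + 1)) : PdLT A K n :=
  (shortComplexOfExact_shortExact hi h hp).hasProjectiveDimensionLT_X₁ n hM hX

lemma PdLT.of_exact_middle {n : ℕ} {i : K →ₗ[A] M} {p : M →ₗ[A] X} (hi : Function.Injective i)
    (h : Function.Exact i p) (hp : Function.Surjective p) (hK : PdLT A K n)
    (hX : PdLT A X n) : PdLT A M n :=
  (shortComplexOfExact_shortExact hi h hp).hasProjectiveDimensionLT_X₂ n hK hX

lemma PdLT.prod {n : ℕ} (hM : PdLT A M n) (hX : PdLT A X n) : PdLT A (M × X) n :=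
  PdLT.of_exact_middle (i := LinearMap.inl A M X) (p := LinearMap.snd A M X)
    LinearMap.inl_injective Function.Exact.inl_snd LinearMap.snd_surjective hM hX

/-- An endomorphism of `Y` which is nilpotent and which, up to a projective summand, is a
monomorphism with cokernel of finite projective dimension forces `Y` to have finite projective
dimension. -/
lemma PdLT.of_isNilpotent {Q : Type u} [AddCommGroup Q] [Module A Q] [Module.Projective A Q]
    {f : Module.End A Y} (hf : IsNilpotent f) {g : Y →ₗ[A] Q} {p : Y × Q →ₗ[A] X}
    (hi : Function.Injective (f.prod g)) (h : Function.Exact (f.prod g) p)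
    (hp : Function.Surjective p) {n : ℕ} (hX : PdLT A X (n + 1)) : PdLT A Y (n + 1) := by
  refine (hasProjectiveDimensionLT_iff _ _).2 fun k hk Z e => ?_
  have hQ : PdLT A Q 1 := pdLT_one_iff.2 inferInstance
  have key : ∀ e : Ext (ModuleCat.of A Y) Z k, ∃ e' : Ext (ModuleCat.of A Y) Z k,
      (Ext.mk₀ (ModuleCat.ofHom f)).comp e' (zero_add k) = e := by
    intro e
    obtain ⟨e₂, he₂⟩ := Ext.contravariant_sequence_exact₁
      (shortComplexOfExact_shortExact hi h hp) Z e (n₁ := 1 + k) rfl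
      (Ext.eq_zero_of_hasProjectiveDimensionLT _ (n + 1) (by lia))
    refine ⟨(Ext.mk₀ (ModuleCat.ofHom (LinearMap.inl A Y Q))).comp e₂ (zero_add k), ?_⟩
    have hz : (Ext.mk₀ (ModuleCat.ofHom (LinearMap.inr A Y Q))).comp e₂ (zero_add k) = 0 :=
      Ext.eq_zero_of_hasProjectiveDimensionLT _ 1 (by lia)
    have hsum : ModuleCat.ofHom (f.prod g) =
        ModuleCat.ofHom f ≫ ModuleCat.ofHom (LinearMap.inl A Y Q) +
        ModuleCat.ofHom g ≫ ModuleCat.ofHom (LinearMap.inr A Y Q) := by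
      ext <;> simp
    rw [← he₂]
    change _ = (Ext.mk₀ (ModuleCat.ofHom (f.prod g))).comp e₂ _
    rw [hsum, Ext.mk₀_add, Ext.add_comp, ← Ext.mk₀_comp_mk₀_assoc, ← Ext.mk₀_comp_mk₀_assoc, hz,
      Ext.comp_zero, add_zero]
  have key' : ∀ m : ℕ, ∀ e : Ext (ModuleCat.of A Y) Z k, ∃ e' : Ext (ModuleCat.of A Y) Z k,
      (Ext.mk₀ (ModuleCat.ofHom (f ^ m))).comp e' (zero_add k) = e := by
    intro m
    induction m with
    | zero => exact fun e => ⟨e, Ext.mk₀_id_comp e⟩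
    | succ m ih =>
      intro e
      obtain ⟨e₁, rfl⟩ := ih e
      obtain ⟨e₂, rfl⟩ := key e₁
      refine ⟨e₂, ?_⟩
      rw [Ext.mk₀_comp_mk₀_assoc, ← ModuleCat.ofHom_comp, pow_succ']
  obtain ⟨m, hm⟩ := hf
  obtain ⟨e', rfl⟩ := key' m e
  rw [hm]
  change (Ext.mk₀ (0 : ModuleCat.of A Y ⟶ ModuleCat.of A Y)).comp e' _ = 0
  rw [Ext.mk₀_zero, Ext.zero_comp]

lemma projDimLE_iff [IsNoetherianRing A] (n : ℕ) (M : ModuleCat.{u} A) [Module.Finite A M] :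
    ProjDimLE A n M ↔ PdLT A M (n + 1) := by
  induction n generalizing M with
  | zero => exact pdLT_one_iff.symm
  | succ n ih =>
    constructor
    · rintro ⟨P, g, hP, hPf, hg, hk⟩
      exact PdLT.of_exact_right (Submodule.subtype_injective _) (LinearMap.exact_subtype_ker_map g)
        hg ((ih _).1 hk) ((pdLT_one_iff.2 hP).mono (by lia))
    · intro h
      obtain ⟨q, g, hg⟩ := Module.Finite.exists_fin' A M
      refine ⟨ModuleCat.of A (Fin q → A), g, inferInstance, inferInstance, hg, ?_⟩
      refine (ih _).2 (PdLT.of_exact_left (Submodule.subtype_injective _)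
        (LinearMap.exact_subtype_ker_map g) hg ?_ h)
      exact (pdLT_one_iff.2 inferInstance).mono (by lia)

end ProjectiveDimension

section StableSequences

variable {A : Type u} [Ring A]
variable {K M X K' M' X' L : Type u} [AddCommGroup K] [Module A K] [AddCommGroup M] [Module A M]
  [AddCommGroup X] [Module A X] [AddCommGroup K'] [Module A K'] [AddCommGroup M'] [Module A M']
  [AddCommGroup X'] [Module A X'] [AddCommGroup L] [Module A L]

variable (A) in
/-- There is a short exact sequence `0 → K → M × P → X → 0` with `P` finitely generated
projective. -/
def StableExact (K M X : Type u) [AddCommGroup K] [Module A K] [AddCommGroup M] [Module A M]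
    [AddCommGroup X] [Module A X] : Prop :=
  ∃ (P : ModuleCat.{u} A) (i : K →ₗ[A] M × P) (p : M × P →ₗ[A] X),
    Module.Projective A P ∧ Module.Finite A P ∧
    Function.Injective i ∧ Function.Exact i p ∧ Function.Surjective p

variable (A) in
/-- There is a short exact sequence `0 → K → Q → M → 0` with `Q` finitely generated projective. -/
def KernelOfProjective (K M : Type u) [AddCommGroup K] [Module A K] [AddCommGroup M]
    [Module A M] : Prop :=
  ∃ (Q : ModuleCat.{u} A) (i : K →ₗ[A] Q) (p : Q →ₗ[A] M),
    Module.Projective A Q ∧ Module.Finite A Q ∧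
    Function.Injective i ∧ Function.Exact i p ∧ Function.Surjective p

variable (A) in
/-- `K` and `M` become isomorphic after adding finitely generated projective modules. -/
def StableEquiv (K M : Type u) [AddCommGroup K] [Module A K] [AddCommGroup M]
    [Module A M] : Prop :=
  ∃ P Q : ModuleCat.{u} A, Module.Projective A P ∧ Module.Finite A P ∧
    Module.Projective A Q ∧ Module.Finite A Q ∧ Nonempty ((K × P) ≃ₗ[A] (M × Q))

lemma exact_subtype_comp_of_ker {ψ : M →ₗ[A] X} (e : K ≃ₗ[A] LinearMap.ker ψ) :
    Function.Exact ((LinearMap.ker ψ).subtype ∘ₗ e.toLinearMap) ψ := by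
  intro y
  constructor
  · intro hy
    exact ⟨e.symm ⟨y, hy⟩, by simp⟩
  · rintro ⟨x, rfl⟩
    exact (e x).2

lemma KernelOfProjective.finite [IsNoetherianRing A] (h : KernelOfProjective A K M) :
    Module.Finite A K := by
  obtain ⟨Q, i, p, hP, hf, hi, h, hp⟩ := h
  exact Module.Finite.of_injective i hi

lemma KernelOfProjective.pdLT_iff (h : KernelOfProjective A K M) (n : ℕ) :
    PdLT A M (n + 2) ↔ PdLT A K (n + 1) := by
  obtain ⟨Q, i, p, hP, hf, hi, h, hp⟩ := h
  have hQ : PdLT A Q 1 := pdLT_one_iff.2 hP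
  exact ⟨PdLT.of_exact_left hi h hp (hQ.mono (by lia)),
    fun hK => PdLT.of_exact_right hi h hp hK (hQ.mono (by lia))⟩

lemma exists_kernelOfProjective [IsNoetherianRing A] (M : ModuleCat.{u} A)
    (hM : Module.Finite A M) :
    ∃ K : ModuleCat.{u} A, Module.Finite A K ∧ KernelOfProjective A K M := by
  obtain ⟨q, g, hg⟩ := Module.Finite.exists_fin' A M
  have h : KernelOfProjective A (LinearMap.ker g) M :=
    ⟨ModuleCat.of A (Fin q → A), (LinearMap.ker g).subtype, g, inferInstance, inferInstance,
      Submodule.subtype_injective _, LinearMap.exact_subtype_ker_map g, hg⟩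
  exact ⟨ModuleCat.of A (LinearMap.ker g), h.finite, h⟩

/-- Rotation of a short exact sequence to the syzygies of its terms. -/
lemma StableExact.syzygy (h : StableExact A K M X) (hK : KernelOfProjective A K' K)
    (hM : KernelOfProjective A M' M) :
    ∃ X' : ModuleCat.{u} A, StableExact A K' M' X' ∧ KernelOfProjective A X' X := by
  obtain ⟨P, i, p, hP, hPf, hi, hip, hp⟩ := h
  obtain ⟨QK, iK, pK, hQK, hQKf, hiK, hipK, hpK⟩ := hK
  obtain ⟨QM, iM, pM, hQM, hQMf, hiM, hipM, hpM⟩ := hM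
  let τ : QM × P →ₗ[A] M × P := pM.prodMap LinearMap.id
  have hτ : Function.Surjective τ := Prod.map_surjective.2 ⟨hpM, Function.surjective_id⟩
  let π : QM × P →ₗ[A] X := p ∘ₗ τ
  have hπ : Function.Surjective π := hp.comp hτ
  obtain ⟨ℓ, hℓ⟩ := Module.projective_lifting_property τ (i ∘ₗ pK) hτ
  have hℓ' : ∀ q, τ (ℓ q) = i (pK q) := fun q => LinearMap.congr_fun hℓ q
  let ψ₀ : M' × QK →ₗ[A] QM × P := (LinearMap.inl A QM P ∘ₗ iM).coprod ℓ
  have hψ₀ : ∀ m q, ψ₀ (m, q) = (iM m, 0) + ℓ q := fun m q => by simp [ψ₀]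
  have hτi : ∀ m, τ (iM m, 0) = 0 := fun m => by simp [τ, hipM.apply_apply_eq_zero]
  have hτψ : ∀ m q, τ (ψ₀ (m, q)) = i (pK q) := fun m q => by
    rw [hψ₀, map_add, hτi, hℓ', zero_add]
  let ψ : M' × QK →ₗ[A] LinearMap.ker π := ψ₀.codRestrict _ (by
    rintro ⟨m, q⟩
    change p (τ (ψ₀ (m, q))) = 0
    rw [hτψ, hip.apply_apply_eq_zero])
  have hψ : Function.Surjective ψ := by
    rintro ⟨x, hx⟩
    obtain ⟨k, hk⟩ := (hip (τ x)).1 hx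
    obtain ⟨q, rfl⟩ := hpK k
    have h0 : τ (x - ℓ q) = 0 := by rw [map_sub, hℓ', hk, sub_self]
    have h1 : pM (x - ℓ q).1 = 0 := congrArg Prod.fst h0
    have h2 : (x - ℓ q).2 = 0 := congrArg Prod.snd h0
    obtain ⟨m, hm⟩ := (hipM _).1 h1
    refine ⟨(m, q), Subtype.ext ?_⟩
    change ψ₀ (m, q) = x
    rw [hψ₀, hm, ← h2]
    exact sub_add_cancel x (ℓ q)
  let s : LinearMap.ker ψ →ₗ[A] QK := LinearMap.snd A M' QK ∘ₗ (LinearMap.ker ψ).subtype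
  have hker : ∀ m q, (m, q) ∈ LinearMap.ker ψ ↔ ψ₀ (m, q) = 0 := fun m q => by
    rw [LinearMap.mem_ker, Subtype.ext_iff]; rfl
  have hs : Function.Injective s := by
    rw [injective_iff_map_eq_zero]
    rintro ⟨⟨m, q⟩, hmq⟩ (rfl : q = 0)
    rw [hker, hψ₀, map_zero, add_zero] at hmq
    have : m = 0 := hiM (by rw [map_zero]; exact congrArg Prod.fst hmq)
    subst this
    rfl
  have hrange : LinearMap.range iK = LinearMap.range s := by
    ext q
    constructor
    · rintro ⟨k, rfl⟩
      have h0 : τ (ℓ (iK k)) = 0 := by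
        rw [hℓ', hipK.apply_apply_eq_zero, map_zero]
      have h1 : pM (ℓ (iK k)).1 = 0 := congrArg Prod.fst h0
      have h2 : (ℓ (iK k)).2 = 0 := congrArg Prod.snd h0
      obtain ⟨m, hm⟩ := (hipM _).1 h1
      refine ⟨⟨(-m, iK k), ?_⟩, rfl⟩
      rw [hker, hψ₀, map_neg, hm]
      ext
      · simp
      · simp [h2]
    · rintro ⟨⟨⟨m, q⟩, hmq⟩, rfl⟩
      rw [hker] at hmq
      have h0 : i (pK q) = 0 := by rw [← hτψ m q, hmq, map_zero]
      have h1 : pK q = 0 := hi (by rw [h0, map_zero])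
      exact (hipK q).1 h1
  let e : K' ≃ₗ[A] LinearMap.ker ψ :=
    (LinearEquiv.ofInjective iK hiK).trans
      ((LinearEquiv.ofEq _ _ hrange).trans (LinearEquiv.ofInjective s hs).symm)
  refine ⟨ModuleCat.of A (LinearMap.ker π), ⟨QK, _, ψ, hQK, hQKf, ?_,
    exact_subtype_comp_of_ker e, hψ⟩, ⟨ModuleCat.of A (QM × P), (LinearMap.ker π).subtype, π, ?_, ?_,
      Submodule.subtype_injective _, LinearMap.exact_subtype_ker_map π, hπ⟩⟩
  · exact (Submodule.subtype_injective _).comp e.injective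
  · exact inferInstanceAs (Module.Projective A (QM × P))
  · exact inferInstanceAs (Module.Finite A (QM × P))

lemma StableExact.stableEquiv (h : StableExact A K M X) [Module.Projective A X]
    [Module.Finite A X] : StableEquiv A K M := by
  obtain ⟨P, i, p, hP, hPf, hi, hip, hp⟩ := h
  obtain ⟨l, hl⟩ := Module.projective_lifting_property p LinearMap.id hp
  exact ⟨ModuleCat.of A X, P, ‹_›, ‹_›, hP, hPf,
    ⟨(hip.splitSurjectiveEquiv hi ⟨l, hl⟩).1.symm⟩⟩

lemma StableEquiv.of_equiv (e : K ≃ₗ[A] M) : StableEquiv A K M :=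
  ⟨ModuleCat.of A PUnit, ModuleCat.of A PUnit, inferInstance, inferInstance, inferInstance,
    inferInstance, ⟨e.prodCongr (LinearEquiv.refl A PUnit.{u + 1})⟩⟩

lemma StableEquiv.symm (h : StableEquiv A K M) : StableEquiv A M K := by
  obtain ⟨P, Q, hP, hPf, hQ, hQf, ⟨e⟩⟩ := h
  exact ⟨Q, P, hQ, hQf, hP, hPf, ⟨e.symm⟩⟩

lemma StableEquiv.trans (h : StableEquiv A K M) (h' : StableEquiv A M L) : StableEquiv A K L := by
  obtain ⟨P, Q, hP, hPf, hQ, hQf, ⟨e⟩⟩ := h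
  obtain ⟨P', Q', hP', hPf', hQ', hQf', ⟨e'⟩⟩ := h'
  refine ⟨ModuleCat.of A (P × P'), ModuleCat.of A (Q' × Q),
    inferInstanceAs (Module.Projective A (P × P')), inferInstanceAs (Module.Finite A (P × P')),
    inferInstanceAs (Module.Projective A (Q' × Q)), inferInstanceAs (Module.Finite A (Q' × Q)),
    ⟨?_⟩⟩
  exact (LinearEquiv.prodAssoc A K P P').symm ≪≫ₗ e.prodCongr (LinearEquiv.refl A P') ≪≫ₗ
    LinearEquiv.prodAssoc A M Q P' ≪≫ₗ
    (LinearEquiv.refl A M).prodCongr (LinearEquiv.prodComm A Q P') ≪≫ₗ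
    (LinearEquiv.prodAssoc A M P' Q).symm ≪≫ₗ e'.prodCongr (LinearEquiv.refl A Q) ≪≫ₗ
    LinearEquiv.prodAssoc A L Q' Q

lemma StableEquiv.prod (h : StableEquiv A K M) (h' : StableEquiv A K' M') :
    StableEquiv A (K × K') (M × M') := by
  obtain ⟨P, Q, hP, hPf, hQ, hQf, ⟨e⟩⟩ := h
  obtain ⟨P', Q', hP', hPf', hQ', hQf', ⟨e'⟩⟩ := h'
  exact ⟨ModuleCat.of A (P × P'), ModuleCat.of A (Q × Q'),
    inferInstanceAs (Module.Projective A (P × P')), inferInstanceAs (Module.Finite A (P × P')),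
    inferInstanceAs (Module.Projective A (Q × Q')), inferInstanceAs (Module.Finite A (Q × Q')),
    ⟨LinearEquiv.prodProdProdComm A K K' P P' ≪≫ₗ e.prodCongr e' ≪≫ₗ
      LinearEquiv.prodProdProdComm A M Q M' Q'⟩⟩

lemma StableEquiv.syzygy [IsNoetherianRing A] (h : StableEquiv A K M)
    (hK : KernelOfProjective A K' K) (hM : KernelOfProjective A M' M) : StableEquiv A K' M' := by
  obtain ⟨P, Q, hP, hPf, hQ, hQf, ⟨e⟩⟩ := h
  have hex : StableExact A K M P := by
    refine ⟨Q, e.toLinearMap ∘ₗ LinearMap.inl A K P, LinearMap.snd A K P ∘ₗ e.symm.toLinearMap,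
      hQ, hQf, e.injective.comp LinearMap.inl_injective, ?_,
      Prod.snd_surjective.comp e.symm.surjective⟩
    intro y
    obtain ⟨⟨k, x⟩, rfl⟩ := e.surjective y
    constructor
    · intro hx
      have : x = 0 := by simpa using hx
      exact ⟨k, by simp [this]⟩
    · rintro ⟨k', hk'⟩
      rw [← hk']
      simp
  obtain ⟨X', hX', hs⟩ := hex.syzygy hK hM
  have hproj : Module.Projective A X' :=
    pdLT_one_iff.1 ((hs.pdLT_iff 0).1 ((pdLT_one_iff.2 hP).mono (by lia)))
  have := hs.finite
  exact hX'.stableEquiv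

lemma StableExact.congr (h : StableExact A K M X) (e : K ≃ₗ[A] K') (e' : M ≃ₗ[A] M') :
    StableExact A K' M' X := by
  obtain ⟨P, i, p, hP, hPf, hi, hip, hp⟩ := h
  let E := e'.prodCongr (LinearEquiv.refl A P)
  refine ⟨P, E.toLinearMap ∘ₗ i ∘ₗ e.symm.toLinearMap, p ∘ₗ E.symm.toLinearMap, hP, hPf,
    E.injective.comp (hi.comp e.symm.injective), ?_, hp.comp E.symm.surjective⟩
  intro y
  obtain ⟨z, rfl⟩ := E.surjective y
  constructor
  · intro hz
    obtain ⟨k, rfl⟩ := (hip z).1 (by simpa using hz)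
    exact ⟨e k, by simp⟩
  · rintro ⟨k, hk⟩
    rw [← hk]
    simp [hip.apply_apply_eq_zero]

variable (L) in
lemma StableExact.prod_right (h : StableExact A K M X) : StableExact A (K × L) (M × L) X := by
  obtain ⟨P, i, p, hP, hPf, hi, hip, hp⟩ := h
  let E : ((M × P) × L) ≃ₗ[A] ((M × L) × P) :=
    LinearEquiv.prodAssoc A M P L ≪≫ₗ
    (LinearEquiv.refl A M).prodCongr (LinearEquiv.prodComm A P L) ≪≫ₗ
    (LinearEquiv.prodAssoc A M L P).symm
  refine ⟨P, E.toLinearMap ∘ₗ i.prodMap LinearMap.id,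
    p ∘ₗ LinearMap.fst A _ _ ∘ₗ E.symm.toLinearMap, hP, hPf,
    E.injective.comp (Prod.map_injective.2 ⟨hi, Function.injective_id⟩), ?_,
    hp.comp (Prod.fst_surjective.comp E.symm.surjective)⟩
  intro y
  obtain ⟨⟨z, l⟩, rfl⟩ := E.surjective y
  constructor
  · intro hz
    obtain ⟨k, rfl⟩ := (hip z).1 (by simpa using hz)
    exact ⟨(k, l), rfl⟩
  · rintro ⟨⟨k, l'⟩, hk⟩
    rw [← hk]
    simp [hip.apply_apply_eq_zero]

end StableSequences

section KrullSchmidt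

variable {A : Type u} [Ring A]

variable (A) in
/-- `X` is a direct summand of a finite direct sum of copies of `N`, expressed by writing the
identity of `X` as a finite sum of maps factoring through `N`. -/
def AddRetract (N X : Type u) [AddCommGroup N] [Module A N] [AddCommGroup X] [Module A X] : Prop :=
  ∃ (κ : Type) (_ : Fintype κ) (i : κ → X →ₗ[A] N) (p : κ → N →ₗ[A] X),
    ∑ t, p t ∘ₗ i t = LinearMap.id

section AddRetract

variable {N X Y Z : Type u} [AddCommGroup N] [Module A N] [AddCommGroup X] [Module A X]
  [AddCommGroup Y] [Module A Y] [AddCommGroup Z] [Module A Z]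

lemma AddRetract.of_retract (i : X →ₗ[A] N) (p : N →ₗ[A] X) (h : p ∘ₗ i = LinearMap.id) :
    AddRetract A N X :=
  ⟨Unit, inferInstance, fun _ => i, fun _ => p, by simpa using h⟩

lemma AddRetract.of_equiv (e : X ≃ₗ[A] N) : AddRetract A N X :=
  .of_retract e.toLinearMap e.symm.toLinearMap (by ext; simp)

lemma AddRetract.trans (h : AddRetract A X Y) (h' : AddRetract A N X) : AddRetract A N Y := by
  obtain ⟨κ, _, i, p, hip⟩ := h
  obtain ⟨κ', _, i', p', hip'⟩ := h'
  refine ⟨κ × κ', inferInstance, fun t => i' t.2 ∘ₗ i t.1, fun t => p t.1 ∘ₗ p' t.2, ?_⟩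
  rw [← hip, Fintype.sum_prod_type]
  refine Finset.sum_congr rfl fun s _ => ?_
  ext y
  have := congrArg (p s) (LinearMap.congr_fun hip' (i s y))
  simpa using this

lemma AddRetract.prod (h : AddRetract A N X) (h' : AddRetract A N Y) : AddRetract A N (X × Y) := by
  obtain ⟨κ, _, i, p, hip⟩ := h
  obtain ⟨κ', _, i', p', hip'⟩ := h'
  refine ⟨κ ⊕ κ', inferInstance,
    Sum.elim (fun t => i t ∘ₗ LinearMap.fst A X Y) (fun t => i' t ∘ₗ LinearMap.snd A X Y),
    Sum.elim (fun t => LinearMap.inl A X Y ∘ₗ p t) (fun t => LinearMap.inr A X Y ∘ₗ p' t), ?_⟩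
  rw [Fintype.sum_sum_type]
  refine LinearMap.ext fun z => ?_
  have h1 := LinearMap.congr_fun hip z.1
  have h2 := LinearMap.congr_fun hip' z.2
  simp only [LinearMap.sum_apply, LinearMap.comp_apply, LinearMap.id_apply] at h1 h2
  simp only [Sum.elim_inl, Sum.elim_inr, LinearMap.add_apply, LinearMap.sum_apply,
    LinearMap.comp_apply, LinearMap.fst_apply, LinearMap.snd_apply, LinearMap.id_apply,
    ← map_sum, h1, h2]
  simp

lemma AddRetract.of_subsingleton [Subsingleton X] : AddRetract A N X :=
  .of_retract 0 0 (LinearMap.ext fun _ => Subsingleton.elim _ _)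

lemma AddRetract.fst (h : AddRetract A N (X × Y)) : AddRetract A N X :=
  AddRetract.trans (.of_retract (LinearMap.inl A X Y) (LinearMap.fst A X Y)
    (LinearMap.fst_comp_inl A X Y)) h

lemma AddRetract.snd (h : AddRetract A N (X × Y)) : AddRetract A N Y :=
  AddRetract.trans (.of_retract (LinearMap.inr A X Y) (LinearMap.snd A X Y)
    (LinearMap.snd_comp_inr A X Y)) h

lemma AddRetract.finite [Module.Finite A N] (h : AddRetract A N X) : Module.Finite A X := by
  obtain ⟨κ, _, i, p, hip⟩ := h
  refine Module.Finite.of_surjective (∑ t, p t ∘ₗ LinearMap.proj t : (κ → N) →ₗ[A] X) fun x => ?_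
  refine ⟨fun t => i t x, ?_⟩
  simpa using LinearMap.congr_fun hip x

end AddRetract

/-- Induction principle: a property of finite length modules, invariant under isomorphism, which
holds for zero and for indecomposable modules and is stable under products, always holds. -/
lemma indecomposable_induction [IsNoetherianRing A] [IsArtinianRing A]
    {P : ModuleCat.{u} A → Prop}
    (hiso : ∀ M N : ModuleCat.{u} A, (M ≃ₗ[A] N) → P M → P N)
    (hzero : ∀ M : ModuleCat.{u} A, Subsingleton M → P M)
    (hprod : ∀ M N : ModuleCat.{u} A, P M → P N → P (ModuleCat.of A (M × N)))
    (hind : ∀ M : ModuleCat.{u} A, Module.Finite A M → ModIndec A M → P M)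
    (M : ModuleCat.{u} A) (hM : Module.Finite A M) : P M := by
  have key : ∀ S : Submodule A M, P (ModuleCat.of A S) := by
    intro S
    induction S using WellFoundedLT.induction with
    | ind S ih =>
      by_cases hS : Subsingleton S
      · exact hzero _ hS
      by_cases hI : ModIndec A (ModuleCat.of A S)
      · exact hind _ (inferInstanceAs (Module.Finite A S)) hI
      have hnt : Nontrivial S := not_subsingleton_iff_nontrivial.1 hS
      obtain ⟨N₁, N₂, hc, h₁, h₂⟩ : ∃ N₁ N₂ : Submodule A S, IsCompl N₁ N₂ ∧ N₁ ≠ ⊥ ∧ N₂ ≠ ⊥ := by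
        by_contra! hcon
        exact hI ⟨hnt, fun N₁ N₂ hc => or_iff_not_imp_left.2 (hcon N₁ N₂ hc)⟩
      have main : ∀ N N' : Submodule A S, IsCompl N N' → N' ≠ ⊥ → P (ModuleCat.of A N) := by
        intro N N' hc hN'
        refine hiso (ModuleCat.of A (N.map S.subtype)) (ModuleCat.of A N)
          (Submodule.equivMapOfInjective S.subtype S.subtype_injective N).symm (ih _ ?_)
        refine lt_of_le_of_ne (Submodule.map_subtype_le S N) fun h => hN' ?_
        have hN : N = ⊤ := by
          apply Submodule.map_injective_of_injective S.subtype_injective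
          rw [h, Submodule.map_top, Submodule.range_subtype]
        rw [hN] at hc
        exact hc.disjoint.eq_bot_of_ge le_top
      exact hiso (ModuleCat.of A (N₁ × N₂)) (ModuleCat.of A S)
        (Submodule.prodEquivOfIsCompl N₁ N₂ hc)
        (hprod _ _ (main N₁ N₂ hc h₂) (main N₂ N₁ hc.symm h₁))
  exact hiso (ModuleCat.of A (⊤ : Submodule A M)) M Submodule.topEquiv (key ⊤)

lemma exists_fitting {U : Type u} [AddCommGroup U] [Module A U] [IsNoetherian A U]
    [IsArtinian A U] (f : Module.End A U) :
    ∃ n : ℕ, 0 < n ∧ IsCompl (LinearMap.ker (f ^ n)) (LinearMap.range (f ^ n)) := by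
  obtain ⟨n, h1, h2⟩ :=
    ((Filter.eventually_gt_atTop 0).and f.eventually_isCompl_ker_pow_range_pow).exists
  exact ⟨n, h1, h2⟩

lemma ModIndec.isLocalRing_end {M : ModuleCat.{u} A} [IsNoetherian A M] [IsArtinian A M]
    (h : ModIndec A M) : IsLocalRing (Module.End A M) := by
  have := h.1
  refine ⟨fun {a b} hab => ?_⟩
  obtain ⟨n, hn, hc⟩ := exists_fitting a
  rcases h.2 _ _ hc with hk | hr
  · left
    rw [hk] at hc
    refine (isUnit_pow_iff hn.ne').1 ((Module.End.isUnit_iff _).2 ⟨LinearMap.ker_eq_bot.1 hk, ?_⟩)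
    rw [← LinearMap.range_eq_top]
    simpa using hc.codisjoint.eq_top
  · right
    have hnil : IsNilpotent a := ⟨n, LinearMap.range_eq_bot.1 hr⟩
    rw [eq_sub_of_add_eq' hab]
    exact hnil.isUnit_one_sub

/-- An indecomposable module which is a retract up to a unit of an indecomposable module is
isomorphic to it. -/
lemma ModIndec.nonempty_equiv {M N : ModuleCat.{u} A} (hM : ModIndec A M) (hN : ModIndec A N)
    (i : M →ₗ[A] N) (p : N →ₗ[A] M) (h : IsUnit (p ∘ₗ i : Module.End A M)) :
    Nonempty (M ≃ₗ[A] N) := by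
  have hb := (Module.End.isUnit_iff _).1 h
  rw [LinearMap.coe_comp] at hb
  have hi : Function.Injective i := hb.1.of_comp
  have hc : IsCompl (LinearMap.range i) (LinearMap.ker p) := by
    refine ⟨Submodule.disjoint_def.2 ?_, codisjoint_iff.2 (Submodule.eq_top_iff'.2 fun y => ?_)⟩
    · rintro _ ⟨x, rfl⟩ hx
      have : x = 0 := hb.1 (by simpa using hx)
      rw [this, map_zero]
    · obtain ⟨x, hx⟩ := hb.2 (p y)
      refine Submodule.mem_sup.2 ⟨i x, ⟨x, rfl⟩, y - i x, ?_, by abel⟩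
      rw [LinearMap.mem_ker, map_sub, sub_eq_zero]
      exact hx.symm
  have := hM.1
  rcases hN.2 _ _ hc with hr | hk
  · obtain ⟨x, hx⟩ := exists_ne (0 : M)
    exact absurd (hi (by simpa using LinearMap.congr_fun (LinearMap.range_eq_bot.1 hr) x)) hx
  · rw [hk] at hc
    refine ⟨LinearEquiv.ofBijective i ⟨hi, LinearMap.range_eq_top.1 ?_⟩⟩
    simpa using hc.codisjoint.eq_top

/-- The indecomposable summands of sums of copies of a finite length module fall into finitely
many isomorphism classes. -/
lemma exists_finite_indecomposable_family [IsNoetherianRing A] [IsArtinianRing A]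
    (N : ModuleCat.{u} A) (hN : Module.Finite A N) :
    ∃ (ι : Type) (_ : Fintype ι) (L : ι → ModuleCat.{u} A), (∀ j, Module.Finite A (L j)) ∧
      ∀ M : ModuleCat.{u} A, Module.Finite A M → ModIndec A M → AddRetract A N M →
        ∃ j, Nonempty (M ≃ₗ[A] L j) := by
  obtain ⟨ι, _, L, hL, i, p, hip⟩ : ∃ (ι : Type) (_ : Fintype ι) (L : ι → ModuleCat.{u} A)
      (_ : ∀ j, Module.Finite A (L j) ∧ ModIndec A (L j))
      (i : ∀ j, N →ₗ[A] L j) (p : ∀ j, L j →ₗ[A] N), ∑ j, p j ∘ₗ i j = LinearMap.id := by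
    refine indecomposable_induction (P := fun N => ∃ (ι : Type) (_ : Fintype ι)
      (L : ι → ModuleCat.{u} A) (_ : ∀ j, Module.Finite A (L j) ∧ ModIndec A (L j))
      (i : ∀ j, N →ₗ[A] L j) (p : ∀ j, L j →ₗ[A] N), ∑ j, p j ∘ₗ i j = LinearMap.id)
      ?_ ?_ ?_ ?_ N hN
    · rintro M N e ⟨ι, hι, L, hL, i, p, hip⟩
      refine ⟨ι, hι, L, hL, fun j => i j ∘ₗ e.symm.toLinearMap, fun j => e.toLinearMap ∘ₗ p j,
        LinearMap.ext fun x => ?_⟩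
      simpa using congrArg e (LinearMap.congr_fun hip (e.symm x))
    · intro M hM
      exact ⟨Empty, inferInstance, fun j => j.elim, fun j => j.elim, fun j => j.elim,
        fun j => j.elim, LinearMap.ext fun x => Subsingleton.elim _ _⟩
    · rintro M N ⟨ι, hι, L, hL, i, p, hip⟩ ⟨ι', hι', L', hL', i', p', hip'⟩
      refine ⟨ι ⊕ ι', inferInstance, Sum.elim L L', fun j => by
          rcases j with j | j
          exacts [hL j, hL' j],
        Sum.rec (fun j => i j ∘ₗ LinearMap.fst A M N) (fun j => i' j ∘ₗ LinearMap.snd A M N),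
        Sum.rec (fun j => LinearMap.inl A M N ∘ₗ p j) (fun j => LinearMap.inr A M N ∘ₗ p' j), ?_⟩
      rw [Fintype.sum_sum_type]
      refine LinearMap.ext fun z => ?_
      have h1 := LinearMap.congr_fun hip z.1
      have h2 := LinearMap.congr_fun hip' z.2
      simp only [LinearMap.sum_apply, LinearMap.comp_apply, LinearMap.id_apply] at h1 h2
      simp only [LinearMap.add_apply, LinearMap.sum_apply]
      change ∑ x, LinearMap.inl A M N ((p x) (i x z.1)) +
        ∑ x, LinearMap.inr A M N (p' x (i' x z.2)) = z
      rw [← map_sum, ← map_sum, h1, h2]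
      exact Prod.ext (add_zero _) (zero_add _)
    · intro M hM hI
      exact ⟨Unit, inferInstance, fun _ => M, fun _ => ⟨hM, hI⟩, fun _ => LinearMap.id,
        fun _ => LinearMap.id, by simp⟩
  refine ⟨ι, inferInstance, L, fun j => (hL j).1, fun M hM hI hR => ?_⟩
  obtain ⟨κ, _, i', p', hip'⟩ := hR
  have := hI.isLocalRing_end
  have hsum : ∑ t : κ, ∑ j : ι, ((p' t ∘ₗ p j) ∘ₗ (i j ∘ₗ i' t) : Module.End A M) = 1 := by
    rw [Module.End.one_eq_id, ← hip']
    refine Finset.sum_congr rfl fun t _ => LinearMap.ext fun x => ?_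
    simpa using congrArg (p' t) (LinearMap.congr_fun hip (i' t x))
  obtain ⟨t, -, ht⟩ := IsLocalRing.exists_of_isUnit_sum (hsum ▸ isUnit_one)
  obtain ⟨j, -, hj⟩ := IsLocalRing.exists_of_isUnit_sum ht
  exact ⟨j, hI.nonempty_equiv (hL j).2 _ _ hj⟩

end KrullSchmidt

section FittingStep

variable {A : Type u} [Ring A]
variable {U Q C K M X : Type u} [AddCommGroup U] [Module A U] [AddCommGroup Q] [Module A Q]
  [AddCommGroup C] [Module A C] [AddCommGroup K] [Module A K] [AddCommGroup M] [Module A M]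
  [AddCommGroup X] [Module A X]

/-- If `0 → U → U × Q → C → 0` is exact with `Q` projective, the projective dimension of `C`, if
finite, is controlled by that of the direct summands of `U`. -/
lemma PdLT.of_exact_fitting [IsNoetherian A U] [IsArtinian A U] [Module.Projective A Q]
    {f : Module.End A U} {g : U →ₗ[A] Q} {p : U × Q →ₗ[A] C}
    (hi : Function.Injective (f.prod g)) (h : Function.Exact (f.prod g) p)
    (hp : Function.Surjective p) {D : ℕ}
    (hD : ∀ Y : ModuleCat.{u} A, AddRetract A U Y → (∃ k, PdLT A Y k) → PdLT A Y (D + 1))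
    (hC : ∃ k, PdLT A C k) : PdLT A C (D + 2) := by
  obtain ⟨n, hn, hc⟩ := exists_fitting f
  set Y := LinearMap.ker (f ^ n) with hY
  have hfY : ∀ y ∈ Y, f y ∈ Y := by
    intro y hy
    rw [hY, LinearMap.mem_ker] at hy ⊢
    rw [← Module.End.mul_apply, ← pow_succ, pow_succ', Module.End.mul_apply, hy, map_zero]
  let f' : Module.End A Y := f.restrict hfY
  let g' : Y →ₗ[A] Q := g ∘ₗ Y.subtype
  let p' : Y × Q →ₗ[A] C := p ∘ₗ Y.subtype.prodMap LinearMap.id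
  have hi' : Function.Injective (f'.prod g') := by
    intro y y' hyy
    refine Subtype.ext (hi (Prod.ext ?_ ?_))
    · exact congrArg (fun z : Y × Q => (z.1 : U)) hyy
    · exact congrArg (fun z : Y × Q => z.2) hyy
  have hh : Function.Exact (f'.prod g') p' := by
    rintro ⟨y, q⟩
    constructor
    · intro hz
      obtain ⟨u, hu⟩ := (h (y, q)).1 hz
      have hu1 : f u = y := congrArg Prod.fst hu
      have hu2 : g u = q := congrArg Prod.snd hu
      have huY : u ∈ Y := by
        have h1 : (f ^ n) u ∈ Y := by
          rw [hY, LinearMap.mem_ker, ← Module.End.mul_apply, ← pow_add]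
          have h2 : (f ^ n) (f u) = 0 := by rw [hu1]; exact y.2
          rw [show n + n = (n - 1) + n + 1 by lia, pow_succ, pow_add, Module.End.mul_apply,
            Module.End.mul_apply, h2, map_zero]
        exact Submodule.disjoint_def.1 hc.disjoint _ h1 ⟨u, rfl⟩
      exact ⟨⟨u, huY⟩, Prod.ext (Subtype.ext hu1) hu2⟩
    · rintro ⟨u, hu⟩
      rw [← hu]
      exact h.apply_apply_eq_zero (u : U)
  have hp' : Function.Surjective p' := by
    intro c
    obtain ⟨⟨u, q⟩, rfl⟩ := hp c
    obtain ⟨y, hy, z, ⟨w, rfl⟩, rfl⟩ : ∃ y ∈ Y, ∃ z ∈ LinearMap.range (f ^ n), y + z = u :=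
      Submodule.mem_sup.1 (hc.codisjoint.eq_top ▸ Submodule.mem_top)
    obtain ⟨m, rfl⟩ : ∃ m, n = m + 1 := ⟨n - 1, by lia⟩
    refine ⟨(⟨y, hy⟩, q - g ((f ^ m) w)), ?_⟩
    have h0 := h.apply_apply_eq_zero ((f ^ m) w)
    have h1 : (y + (f ^ (m + 1)) w, q) =
        (y, q - g ((f ^ m) w)) + (f.prod g) ((f ^ m) w) := by
      rw [pow_succ']
      ext <;> simp
    rw [h1, map_add, h0, add_zero]
    rfl
  have hnil : IsNilpotent f' := ⟨n, by
    ext y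
    rw [Module.End.pow_restrict n hfY]
    exact y.2⟩
  obtain ⟨k, hk⟩ := hC
  have hYD : PdLT A Y (D + 1) := by
    refine hD (ModuleCat.of A Y) (.of_retract Y.subtype (Y.projectionOnto _ hc) ?_)
      ⟨k + 1, PdLT.of_isNilpotent hnil hi' hh hp' (hk.mono (Nat.le_succ k))⟩
    ext y
    simp
  exact PdLT.of_exact_right hi' hh hp' hYD
    ((hYD.mono (by lia)).prod ((pdLT_one_iff.2 inferInstance).mono (by lia)))

lemma AddRetract.of_projective [Module.Projective A Q] [Module.Finite A Q] :
    AddRetract A A Q := by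
  obtain ⟨n, p, hp⟩ := Module.Finite.exists_fin' A Q
  obtain ⟨l, hl⟩ := Module.projective_lifting_property p LinearMap.id hp
  refine ⟨Fin n, inferInstance, fun t => LinearMap.proj t ∘ₗ l,
    fun t => p ∘ₗ LinearMap.single A (fun _ => A) t, LinearMap.ext fun x => ?_⟩
  have h1 : ∑ t, LinearMap.single A (fun _ => A) t (l x t) = l x := by
    ext t
    simp [Finset.sum_apply, Pi.single_apply]
  have h2 : p (l x) = x := LinearMap.congr_fun hl x
  simp only [LinearMap.sum_apply, LinearMap.comp_apply, LinearMap.proj_apply, LinearMap.id_apply]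
  rw [← map_sum, h1, h2]

/-- The bound of `PdLT.of_exact_fitting` for a short exact sequence `0 → K → M × P → X → 0` whose
first two terms are stably equivalent. -/
lemma StableExact.pdLT_of_stableEquiv [IsNoetherianRing A] [IsArtinianRing A]
    (h : StableExact A K M X) (he : StableEquiv A K M) [Module.Finite A K] {D : ℕ}
    (hD : ∀ Y : ModuleCat.{u} A, AddRetract A (K × A) Y → (∃ k, PdLT A Y k) → PdLT A Y (D + 1))
    (hX : ∃ k, PdLT A X k) : PdLT A X (D + 2) := by
  obtain ⟨P, i, p, hP, hPf, hi, hip, hp⟩ := h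
  obtain ⟨Q₁, Q₀, hQ₁, hQ₁f, hQ₀, hQ₀f, ⟨e⟩⟩ := he
  let f : Module.End A (K × Q₁) := e.symm.toLinearMap ∘ₗ
    LinearMap.inl A M Q₀ ∘ₗ LinearMap.fst A M P ∘ₗ i ∘ₗ LinearMap.fst A K Q₁
  let g : K × Q₁ →ₗ[A] P × Q₁ := (LinearMap.snd A M P ∘ₗ i).prodMap LinearMap.id
  let E : ((K × Q₁) × (P × Q₁)) ≃ₗ[A] ((M × P) × (Q₀ × Q₁)) :=
    e.prodCongr (LinearEquiv.refl A (P × Q₁)) ≪≫ₗ LinearEquiv.prodProdProdComm A M Q₀ P Q₁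
  let r : (M × P) × (Q₀ × Q₁) →ₗ[A] X × Q₀ := p.prodMap (LinearMap.fst A Q₀ Q₁)
  have hE : ∀ u, E ((f.prod g) u) = (i u.1, (0, u.2)) := fun u => by
    simp [E, f, g]
  have hinj : Function.Injective (f.prod g) := by
    intro u u' huu
    have h1 := congrArg E huu
    rw [hE, hE] at h1
    exact Prod.ext (hi (congrArg Prod.fst h1)) (congrArg (fun z => z.2.2) h1)
  have hex : Function.Exact (f.prod g) (r ∘ₗ E.toLinearMap) := by
    intro y
    constructor
    · intro hy
      have h1 : p (E y).1 = 0 := congrArg Prod.fst hy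
      have h2 : (E y).2.1 = 0 := congrArg Prod.snd hy
      obtain ⟨k, hk⟩ := (hip _).1 h1
      refine ⟨(k, (E y).2.2), E.injective ?_⟩
      rw [hE, hk, ← h2]
    · rintro ⟨u, rfl⟩
      change r (E ((f.prod g) u)) = 0
      rw [hE]
      exact Prod.ext (hip.apply_apply_eq_zero _) rfl
  have hsurj : Function.Surjective (r ∘ₗ E.toLinearMap) :=
    (Prod.map_surjective.2 ⟨hp, Prod.fst_surjective⟩).comp E.surjective
  obtain ⟨k, hk⟩ := hX
  have hU : AddRetract A (K × A) (K × Q₁) :=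
    .prod (.of_retract (LinearMap.inl A K A) (LinearMap.fst A K A) (LinearMap.fst_comp_inl A K A))
      (.trans .of_projective
        (.of_retract (LinearMap.inr A K A) (LinearMap.snd A K A) (LinearMap.snd_comp_inr A K A)))
  have hC : PdLT A (X × Q₀) (D + 2) := by
    refine PdLT.of_exact_fitting hinj hex hsurj (fun Y hY => hD Y (hY.trans hU)) ⟨k + 1, ?_⟩
    exact (hk.mono (by lia)).prod ((pdLT_one_iff.2 hQ₀).mono (by lia))
  exact hC.of_retract (LinearMap.inl A X Q₀) (LinearMap.fst A X Q₀) (LinearMap.fst_comp_inl A X Q₀)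

end FittingStep

section Cancellation

/-- For an increasing sequence of congruences on the free commutative monoid on a finite set, a
relation which holds at some stage holds at a fixed stage after adding a common summand. -/
lemma exists_forall_rel_append {ι : Type} [Fintype ι] (r : ℕ → List ι → List ι → Prop)
    (hperm : ∀ m l l', l.Perm l' → r m l l') (hsymm : ∀ m l l', r m l l' → r m l' l)
    (htrans : ∀ m l l' l'', r m l l' → r m l' l'' → r m l l'')
    (happ : ∀ m l₁ l₁' l₂ l₂', r m l₁ l₁' → r m l₂ l₂' → r m (l₁ ++ l₂) (l₁' ++ l₂'))
    (hsucc : ∀ m l l', r m l l' → r (m + 1) l l') :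
    ∃ n, ∀ m l l', r m l l' → ∃ c, r n (l ++ c) (l' ++ c) := by
  classical
  let vec : List ι → ι → ℤ := fun l j => (l.count j : ℤ)
  have hvec : ∀ l l', vec (l ++ l') = vec l + vec l' := fun l l' => by
    ext j
    simp [vec]
  let V : ℕ → AddSubgroup (ι → ℤ) := fun m =>
    { carrier := {v | ∃ l l', r m l l' ∧ v = vec l - vec l'}
      zero_mem' := ⟨[], [], hperm m _ _ (List.Perm.refl _), (sub_self _).symm⟩
      add_mem' := by
        rintro _ _ ⟨a, b, h, rfl⟩ ⟨a', b', h', rfl⟩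
        refine ⟨a ++ a', b ++ b', happ m _ _ _ _ h h', ?_⟩
        rw [hvec, hvec]
        abel
      neg_mem' := by
        rintro _ ⟨a, b, h, rfl⟩
        exact ⟨b, a, hsymm m _ _ h, neg_sub _ _⟩ }
  have hV : Monotone fun m => AddSubgroup.toIntSubmodule (V m) := by
    refine monotone_nat_of_le_succ fun m => ?_
    rintro _ ⟨a, b, h, rfl⟩
    exact ⟨a, b, hsucc m _ _ h, rfl⟩
  obtain ⟨n, hn⟩ := monotone_stabilizes_iff_noetherian.2
    (inferInstanceAs (IsNoetherian ℤ (ι → ℤ))) ⟨_, hV⟩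
  refine ⟨n, fun m l l' h => ?_⟩
  have hmem : vec l - vec l' ∈ AddSubgroup.toIntSubmodule (V n) := by
    have h1 : AddSubgroup.toIntSubmodule (V (max n m)) = AddSubgroup.toIntSubmodule (V n) :=
      (hn _ (le_max_left n m)).symm
    rw [← h1]
    exact hV (le_max_right n m) ⟨l, l', h, rfl⟩
  obtain ⟨a, b, hab, hv⟩ := hmem
  refine ⟨b, htrans n _ (l' ++ a) _ (hperm n _ _ (List.perm_iff_count.2 fun j => ?_))
    (happ n _ _ _ _ (hperm n _ _ (List.Perm.refl _)) hab)⟩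
  have h2 : (l.count j : ℤ) - l'.count j = a.count j - b.count j := congrFun hv j
  rw [List.count_append, List.count_append]
  lia

end Cancellation

section ListSum

variable {A : Type u} [Ring A] {ι : Type}

/-- The direct sum of the members of a family indexed by a list. -/
def listSum (L : ι → ModuleCat.{u} A) : List ι → ModuleCat.{u} A
  | [] => ModuleCat.of A PUnit
  | j :: l => ModuleCat.of A (L j × listSum L l)

variable {L L' : ι → ModuleCat.{u} A}

lemma listSum_finite (hL : ∀ j, Module.Finite A (L j)) (l : List ι) :
    Module.Finite A (listSum L l) := by
  induction l with
  | nil => exact inferInstanceAs (Module.Finite A PUnit.{u + 1})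
  | cons j l ih =>
    have := hL j
    exact inferInstanceAs (Module.Finite A (L j × listSum L l))

variable (L) in
lemma listSum_append (l l' : List ι) :
    Nonempty ((listSum L l × listSum L l') ≃ₗ[A] listSum L (l ++ l')) := by
  induction l with
  | nil => exact ⟨LinearEquiv.uniqueProd (M := listSum L l') (M₂ := PUnit.{u + 1})⟩
  | cons j l ih =>
    obtain ⟨e⟩ := ih
    exact ⟨LinearEquiv.prodAssoc A (L j) (listSum L l) (listSum L l') ≪≫ₗ
      (LinearEquiv.refl A (L j)).prodCongr e⟩

variable (L) in
lemma listSum_perm {l l' : List ι} (h : l.Perm l') :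
    Nonempty (listSum L l ≃ₗ[A] listSum L l') := by
  induction h with
  | nil => exact ⟨LinearEquiv.refl A _⟩
  | cons j _ ih =>
    obtain ⟨e⟩ := ih
    exact ⟨(LinearEquiv.refl A (L j)).prodCongr e⟩
  | swap j k l =>
    exact ⟨(LinearEquiv.prodAssoc A (L k) (L j) (listSum L l)).symm ≪≫ₗ
      (LinearEquiv.prodComm A (L k) (L j)).prodCongr (LinearEquiv.refl A _) ≪≫ₗ
      LinearEquiv.prodAssoc A (L j) (L k) (listSum L l)⟩
  | trans _ _ ih ih' =>
    obtain ⟨e⟩ := ih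
    obtain ⟨e'⟩ := ih'
    exact ⟨e.trans e'⟩

lemma KernelOfProjective.prod {K M K' M' : Type u} [AddCommGroup K] [Module A K] [AddCommGroup M]
    [Module A M] [AddCommGroup K'] [Module A K'] [AddCommGroup M'] [Module A M']
    (h : KernelOfProjective A K M) (h' : KernelOfProjective A K' M') :
    KernelOfProjective A (K × K') (M × M') := by
  obtain ⟨Q, i, p, hQ, hQf, hi, hip, hp⟩ := h
  obtain ⟨Q', i', p', hQ', hQf', hi', hip', hp'⟩ := h'
  refine ⟨ModuleCat.of A (Q × Q'), i.prodMap i', p.prodMap p',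
    inferInstanceAs (Module.Projective A (Q × Q')), inferInstanceAs (Module.Finite A (Q × Q')),
    Prod.map_injective.2 ⟨hi, hi'⟩, ?_, Prod.map_surjective.2 ⟨hp, hp'⟩⟩
  rintro ⟨y, y'⟩
  constructor
  · intro hy
    obtain ⟨x, hx⟩ := (hip y).1 (congrArg Prod.fst hy)
    obtain ⟨x', hx'⟩ := (hip' y').1 (congrArg Prod.snd hy)
    exact ⟨(x, x'), Prod.ext hx hx'⟩
  · rintro ⟨x, hx⟩
    rw [← hx]
    exact Prod.ext (hip.apply_apply_eq_zero _) (hip'.apply_apply_eq_zero _)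

lemma listSum_kernelOfProjective (h : ∀ j, KernelOfProjective A (L' j) (L j)) (l : List ι) :
    KernelOfProjective A (listSum L' l) (listSum L l) := by
  induction l with
  | nil =>
    exact ⟨ModuleCat.of A PUnit, LinearMap.id, 0, inferInstance, inferInstance,
      Function.injective_id, fun y => ⟨fun _ => ⟨y, rfl⟩, fun _ => rfl⟩,
      fun y => ⟨y, rfl⟩⟩
  | cons j l ih => exact (h j).prod ih

lemma listSum_addRetract {W : Type u} [AddCommGroup W] [Module A W]
    (h : ∀ j, AddRetract A W (L j)) (l : List ι) : AddRetract A W (listSum L l) := by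
  induction l with
  | nil =>
    exact .of_retract 0 0 (LinearMap.ext fun (_ : PUnit.{u + 1}) => rfl)
  | cons j l ih => exact (h j).prod ih

/-- Decomposition of the objects of `add N` into indecomposable modules. -/
lemma AddRetract.exists_listSum [IsNoetherianRing A] [IsArtinianRing A] {N : Type u}
    [AddCommGroup N] [Module A N]
    (hL : ∀ M : ModuleCat.{u} A, Module.Finite A M → ModIndec A M → AddRetract A N M →
        ∃ j, Nonempty (M ≃ₗ[A] L j))
    (M : ModuleCat.{u} A) (hM : Module.Finite A M) (h : AddRetract A N M) :
    ∃ l : List ι, Nonempty (M ≃ₗ[A] listSum L l) := by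
  revert h
  refine indecomposable_induction (P := fun M => AddRetract A N M →
    ∃ l : List ι, Nonempty (M ≃ₗ[A] listSum L l)) ?_ ?_ ?_ ?_ M hM
  · intro M M' e h hM'
    obtain ⟨l, ⟨e'⟩⟩ := h (.trans (.of_equiv e) hM')
    exact ⟨l, ⟨e.symm.trans e'⟩⟩
  · intro M _ _
    exact ⟨[], ⟨(0 : M ≃ₗ[A] PUnit.{u + 1})⟩⟩
  · intro M M' h h' hMM'
    obtain ⟨l, ⟨e⟩⟩ := h hMM'.fst
    obtain ⟨l', ⟨e'⟩⟩ := h' hMM'.snd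
    obtain ⟨e''⟩ := listSum_append L l l'
    exact ⟨l ++ l', ⟨e.prodCongr e' ≪≫ₗ e''⟩⟩
  · intro M hM hI h
    obtain ⟨j, ⟨e⟩⟩ := hL M hM hI h
    exact ⟨[j], ⟨e ≪≫ₗ (LinearEquiv.prodUnique (M := L j) (M₂ := PUnit.{u + 1})).symm⟩⟩

end ListSum

section IgusaTodorov

variable {A : Type u} [Ring A] [IsNoetherianRing A] [IsArtinianRing A]

/-- The projective dimensions of the objects of `add W` of finite projective dimension are
bounded. -/
lemma exists_pdLT_bound (W : ModuleCat.{u} A) (hW : Module.Finite A W) :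
    ∃ D, ∀ Y : ModuleCat.{u} A, Module.Finite A Y → AddRetract A W Y → (∃ k, PdLT A Y k) →
      PdLT A Y (D + 1) := by
  obtain ⟨ι, _, L, -, hL⟩ := exists_finite_indecomposable_family W hW
  obtain ⟨D, hD⟩ : ∃ D, ∀ j, (∃ k, PdLT A (L j) k) → PdLT A (L j) D := by
    choose F hF using fun j => show ∃ d, (∃ k, PdLT A (L j) k) → PdLT A (L j) d by
      by_cases h : ∃ k, PdLT A (L j) k
      · exact h.imp fun k hk _ => hk
      · exact ⟨0, fun h' => absurd h' h⟩
    exact ⟨Finset.univ.sup F, fun j hj => (hF j hj).mono (Finset.le_sup (Finset.mem_univ j))⟩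
  refine ⟨D, fun Y hY => ?_⟩
  refine indecomposable_induction (P := fun Y => AddRetract A W Y → (∃ k, PdLT A Y k) →
    PdLT A Y (D + 1)) ?_ ?_ ?_ ?_ Y hY
  · rintro M N e h hN ⟨k, hk⟩
    exact (h (.trans (.of_equiv e) hN) ⟨k, hk.of_equiv e.symm⟩).of_equiv e
  · intro M _ _ _
    exact (pdLT_one_iff.2 Module.Projective.of_free).mono (by lia)
  · rintro M N hM hN hMN ⟨k, hk⟩
    exact (hM hMN.fst ⟨k, hk.of_retract (LinearMap.inl A M N) (LinearMap.fst A M N)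
      (LinearMap.fst_comp_inl A M N)⟩).prod (hN hMN.snd ⟨k, hk.of_retract (LinearMap.inr A M N)
        (LinearMap.snd A M N) (LinearMap.snd_comp_inr A M N)⟩)
  · rintro M hM hI hR ⟨k, hk⟩
    obtain ⟨j, ⟨e⟩⟩ := hL M hM hI hR
    exact ((hD j ⟨k, hk.of_equiv e⟩).mono (by lia)).of_equiv e.symm

/-- The Igusa–Todorov bound: the cokernels of finite projective dimension of monomorphisms
between objects of `add N` have bounded projective dimension. -/
theorem exists_pdLT_bound_of_exact (N : ModuleCat.{u} A) (hN : Module.Finite A N) :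
    ∃ D, ∀ (K M X : ModuleCat.{u} A) (i : K →ₗ[A] M) (p : M →ₗ[A] X),
      Module.Finite A K → Module.Finite A M → AddRetract A N K → AddRetract A N M →
      Function.Injective i → Function.Exact i p → Function.Surjective p →
      (∃ k, PdLT A X k) → PdLT A X (D + 1) := by
  obtain ⟨ι, _, L, hLf, hL⟩ := exists_finite_indecomposable_family N hN
  choose S hSf hS using fun M : {M : ModuleCat.{u} A // Module.Finite A M} =>
    exists_kernelOfProjective M.1 M.2
  let T' : ℕ → ι → {M : ModuleCat.{u} A // Module.Finite A M} := fun m =>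
    Nat.rec (fun j => ⟨L j, hLf j⟩) (fun _ t j => ⟨S (t j), hSf (t j)⟩) m
  let T : ℕ → ι → ModuleCat.{u} A := fun m j => (T' m j).1
  have hTf : ∀ m j, Module.Finite A (T m j) := fun m j => (T' m j).2
  have hT : ∀ m l, KernelOfProjective A (listSum (T (m + 1)) l) (listSum (T m) l) := fun m l =>
    listSum_kernelOfProjective (fun j => hS (T' m j)) l
  have htower : ∀ (X : ModuleCat.{u} A) l l',
      StableExact A (listSum (T 0) l) (listSum (T 0) l') X → Module.Finite A X →
      ∀ m, ∃ X' : ModuleCat.{u} A, Module.Finite A X' ∧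
        StableExact A (listSum (T m) l) (listSum (T m) l') X' ∧
        ∀ k, PdLT A X (k + 1 + m) ↔ PdLT A X' (k + 1) := by
    intro X l l' hX hXf m
    induction m with
    | zero => exact ⟨X, hXf, hX, fun k => Iff.rfl⟩
    | succ m ih =>
      obtain ⟨X', hX'f, hX', hpd⟩ := ih
      obtain ⟨X'', hX'', hk⟩ := hX'.syzygy (hT m l) (hT m l')
      refine ⟨X'', hk.finite, hX'', fun k => ?_⟩
      rw [← hk.pdLT_iff, ← hpd (k + 1), show k + 1 + (m + 1) = k + 1 + 1 + m by lia]
  obtain ⟨n, hn⟩ := exists_forall_rel_append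
    (fun m l l' => StableEquiv A (listSum (T m) l) (listSum (T m) l'))
    (fun m l l' h => .of_equiv (listSum_perm (T m) h).some) (fun m l l' h => h.symm)
    (fun m l l' l'' h h' => h.trans h')
    (fun m l₁ l₁' l₂ l₂' h h' => (StableEquiv.of_equiv (listSum_append (T m) l₁ l₂).some.symm).trans
      ((h.prod h').trans (.of_equiv (listSum_append (T m) l₁' l₂').some)))
    (fun m l l' h => h.syzygy (hT m l) (hT m l'))
  let W : ModuleCat.{u} A := ModuleCat.of A ((∀ j, T n j) × A)
  obtain ⟨D, hD⟩ := exists_pdLT_bound W (by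
    have := hTf n
    exact inferInstanceAs (Module.Finite A ((∀ j, T n j) × A)))
  refine ⟨D + 1 + n, fun K M X i p hK hM hNK hNM hi hip hp hX => ?_⟩
  obtain ⟨l, ⟨e⟩⟩ := hNK.exists_listSum hL K hK
  obtain ⟨l', ⟨e'⟩⟩ := hNM.exists_listSum hL M hM
  have hX0 : StableExact A (listSum (T 0) l) (listSum (T 0) l') X := by
    have h0 : StableExact A K M X :=
      ⟨ModuleCat.of A PUnit, LinearMap.inl A M PUnit.{u + 1} ∘ₗ i,
        p ∘ₗ LinearMap.fst A M PUnit.{u + 1}, inferInstance, inferInstance,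
        LinearMap.inl_injective.comp hi,
        fun y => ⟨fun hy => ((hip y.1).1 hy).imp fun x hx => Prod.ext hx rfl, by
          rintro ⟨x, rfl⟩
          exact hip.apply_apply_eq_zero x⟩, hp.comp Prod.fst_surjective⟩
    exact h0.congr e e'
  have hXf : Module.Finite A X := Module.Finite.of_surjective p hp
  obtain ⟨d, hd⟩ := hX
  have hr : StableEquiv A (listSum (T d) l) (listSum (T d) l') := by
    obtain ⟨X', hX'f, hX', hpd⟩ := htower X l l' hX0 hXf d
    have : Module.Projective A X' := pdLT_one_iff.1 ((hpd 0).1 (hd.mono (by lia)))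
    exact hX'.stableEquiv
  obtain ⟨c, hc⟩ := hn d l l' hr
  obtain ⟨X', hX'f, hX', hpd⟩ := htower X l l' hX0 hXf n
  have hex : StableExact A (listSum (T n) (l ++ c)) (listSum (T n) (l' ++ c)) X' :=
    (hX'.prod_right (listSum (T n) c)).congr (listSum_append (T n) l c).some
      (listSum_append (T n) l' c).some
  have := listSum_finite (hTf n) (l ++ c)
  have hWT : AddRetract A W (listSum (T n) (l ++ c)) := by
    classical
    refine listSum_addRetract (fun j => .of_retract
      (LinearMap.inl A (∀ j, T n j) A ∘ₗ LinearMap.single A (fun j => T n j) j)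
      (LinearMap.proj j ∘ₗ LinearMap.fst A (∀ j, T n j) A) ?_) _
    ext x
    simp
  have hWA : AddRetract A W A := .of_retract (LinearMap.inr A (∀ j, T n j) A)
    (LinearMap.snd A (∀ j, T n j) A) (LinearMap.snd_comp_inr A _ _)
  have hbound : PdLT A X' (D + 2) := by
    refine hex.pdLT_of_stableEquiv hc (fun Y hY => hD Y hY.finite (hY.trans (hWT.prod hWA)))
      ⟨d + 1, (hpd d).1 (hd.mono (by lia))⟩
  exact ((hpd (D + 1)).2 hbound).mono (by lia)

end IgusaTodorov

section Induction

variable {R : Type u} [CommRing R] {B A : Type u} [Ring B] [Ring A] [Algebra R B] [Algebra R A]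
  (φ : B →ₐ[R] A)

variable (X Y : Type u) [AddCommGroup X] [Module R X] [Module B X] [IsScalarTower R B X]
  [AddCommGroup Y] [Module R Y] [Module B Y] [IsScalarTower R B Y]

/-- The relations defining `A ⊗_B X` as a quotient of `A ⊗_R X`. -/
def inducedRel : Submodule A (A ⊗[R] X) :=
  Submodule.span A {z | ∃ (a : A) (b : B) (x : X), z = (a * φ b) ⊗ₜ[R] x - a ⊗ₜ[R] (b • x)}

/-- The `A`-module `A ⊗_B X` induced by a `B`-module `X`. -/
abbrev inducedModule : Type u := (A ⊗[R] X) ⧸ inducedRel φ X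

variable {X Y}

/-- Functoriality of the induced module. -/
noncomputable def inducedMap (f : X →ₗ[B] Y) : inducedModule φ X →ₗ[A] inducedModule φ Y :=
  Submodule.mapQ _ _ (TensorProduct.AlgebraTensorModule.map LinearMap.id (f.restrictScalars R)) <| by
    rw [inducedRel, Submodule.span_le]
    rintro _ ⟨a, b, x, rfl⟩
    exact Submodule.subset_span ⟨a, b, f x, by simp⟩

@[simp]
lemma inducedMap_mk_tmul (f : X →ₗ[B] Y) (a : A) (x : X) :
    inducedMap φ f (Submodule.Quotient.mk (a ⊗ₜ[R] x)) = Submodule.Quotient.mk (a ⊗ₜ[R] f x) :=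
  rfl

/-- Induction of modules preserves direct summands of finite sums of copies of a module. -/
lemma AddRetract.induced (h : AddRetract B X Y) :
    AddRetract A (inducedModule φ X) (inducedModule φ Y) := by
  obtain ⟨κ, _, i, p, hip⟩ := h
  refine ⟨κ, inferInstance, fun t => inducedMap φ (i t), fun t => inducedMap φ (p t),
    LinearMap.ext fun z => ?_⟩
  obtain ⟨z, rfl⟩ := Submodule.Quotient.mk_surjective _ z
  induction z with
  | zero => simp
  | add z z' hz hz' => rw [Submodule.Quotient.mk_add, map_add, hz, hz', map_add]
  | tmul a y =>
    have hy : ∑ t, p t (i t y) = y := by simpa using LinearMap.congr_fun hip y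
    conv_rhs => rw [← hy, TensorProduct.tmul_sum]
    simp only [LinearMap.sum_apply, LinearMap.comp_apply, inducedMap_mk_tmul, LinearMap.id_apply]
    exact (map_sum (inducedRel φ Y).mkQ _ _).symm

/-- Over a representation-finite algebra, all finitely generated modules are direct summands of
finite sums of copies of one finitely generated module. -/
lemma RepFinite.exists_addRetract [IsNoetherianRing B] [IsArtinianRing B] (hB : RepFinite B) :
    ∃ N : ModuleCat.{u} B, Module.Finite B N ∧
      ∀ M : ModuleCat.{u} B, Module.Finite B M → AddRetract B N M := by
  classical
  obtain ⟨k, N, hN⟩ := hB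
  let J := {i : Fin k // Module.Finite B (N i)}
  have hJ : ∀ j : J, Module.Finite B (N j) := fun j => j.2
  refine ⟨ModuleCat.of B (∀ j : J, N j), inferInstanceAs (Module.Finite B (∀ j : J, N j)),
    fun M hM => ?_⟩
  refine indecomposable_induction (P := fun M => AddRetract B (∀ j : J, N j) M) ?_ ?_ ?_ ?_ M hM
  · exact fun M M' e h => .trans (.of_equiv e.symm) h
  · exact fun M _ => .of_subsingleton
  · exact fun M M' h h' => h.prod h'
  · intro M hM hI
    obtain ⟨i, ⟨e⟩⟩ := hN M hM hI
    let j : J := ⟨i, Module.Finite.equiv e⟩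
    refine .trans (.of_equiv (N := N j) e)
      (.of_retract (LinearMap.single B (fun j : J => N j) j) (LinearMap.proj j) ?_)
    ext x
    simp

/-- If `B` is representation-finite, the finitely generated `(A,B)`-projective modules are direct
summands of finite sums of copies of one finitely generated module. -/
lemma exists_addRetract_of_relProjective [IsArtinianRing R] [Module.Finite R B]
    [Module.Finite R A] (hB : RepFinite B) :
    ∃ N : ModuleCat.{u} A, Module.Finite A N ∧
      ∀ X : ModuleCat.{u} A, Module.Finite A X → RelProjective φ X → AddRetract A N X := by
  have : IsArtinianRing B := IsArtinianRing.of_finite R B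
  have : IsNoetherianRing B := IsNoetherianRing.of_finite R B
  obtain ⟨N, hNf, hN⟩ := hB.exists_addRetract
  let : Module R N := Module.compHom N (algebraMap R B)
  have : IsScalarTower R B N := ⟨fun r b x => by
    rw [Algebra.smul_def, mul_smul]; rfl⟩
  have : Module.Finite R N := Module.Finite.trans B N
  refine ⟨ModuleCat.of A (inducedModule φ N),
    inferInstanceAs (Module.Finite A (inducedModule φ N)), fun X hX hrel => ?_⟩
  obtain ⟨i, p, hip⟩ := hrel
  let : Module R X := Module.compHom X (algebraMap R A)
  let : Module B X := Module.compHom X φ.toRingHom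
  have : IsScalarTower R A X := ⟨fun r a x => by
    rw [Algebra.smul_def, mul_smul]; rfl⟩
  have : IsScalarTower R B X := ⟨fun r b x => by
    change φ (r • b) • x = r • (φ b • x)
    rw [map_smul, smul_assoc]⟩
  have : Module.Finite R X := Module.Finite.trans A X
  have : Module.Finite B X := Module.Finite.of_restrictScalars_finite R B X
  have h := (hN (ModuleCat.of B X) ‹_›).induced φ
  exact AddRetract.trans (X := inducedModule φ X) (.of_retract i p hip) h

end Induction

variable {R : Type u} [CommRing R] [IsArtinianRing R]
  {B A : Type u} [Ring B] [Ring A] [Algebra R B] [Algebra R A]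
  [Module.Finite R B] [Module.Finite R A]

/-- If `B` is representation-finite and the relative finitistic dimension of
`φ : B → A` is at most `1`, then the finitistic dimension of `A` is finite. -/
theorem statement0 (φ : B →ₐ[R] A)
    (hB : RepFinite B)
    (hfd : ∀ X : ModuleCat.{u} A, Module.Finite A X → (∃ k : ℕ, ProjDimLE A k X) →
      RelProjDimLE φ 1 X) :
    FinFinDim A := by
  have : IsArtinianRing A := IsArtinianRing.of_finite R A
  have : IsNoetherianRing A := IsNoetherianRing.of_finite R A
  obtain ⟨N, hNf, hN⟩ := exists_addRetract_of_relProjective φ hB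
  obtain ⟨D, hD⟩ := exists_pdLT_bound_of_exact N hNf
  refine ⟨D, fun X hX hpd => ?_⟩
  obtain ⟨P, g, hP, hPf, hg, -, hK⟩ := hfd X hX hpd
  obtain ⟨k, hk⟩ := hpd
  have hKf : Module.Finite A (LinearMap.ker g) := inferInstance
  exact (projDimLE_iff D X).2 (hD (ModuleCat.of A (LinearMap.ker g)) P X
    (LinearMap.ker g).subtype g hKf hPf (hN _ hKf hK) (hN _ hPf hP)
    (Submodule.subtype_injective _) (LinearMap.exact_subtype_ker_map g) hg
    ⟨k + 1, (projDimLE_iff k X).1 hk⟩)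
end

section
/- Let R be a commutative Artinian ring and let B and A be Artin R-algebras such that B is representation-finite, and let φ : B → A be an R-algebra homomorphism preserving identities. Suppose 2 ≤ fd(φ) < ∞, where fd(φ) is the relative finitistic dimension of φ, and suppose that for every finitely generated left A-module X of finite projective dimension, the A-module A⊗_B X also has finite projective dimension. Then the finitistic dimension of A is finite. -/
universe u

open TensorProduct

section ProjectiveDimension

open CategoryTheory

variable {Λ : Type u} [Ring Λ]

/-- Retracts of modules, given by linear maps, preserve bounds on the projective dimension. -/
lemma hasProjectiveDimensionLT_of_comp_eq_id {X Y : ModuleCat.{u} Λ} (i : X →ₗ[Λ] Y)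
    (p : Y →ₗ[Λ] X) (h : p.comp i = LinearMap.id) (n : ℕ) [HasProjectiveDimensionLT Y n] :
    HasProjectiveDimensionLT X n :=
  Retract.hasProjectiveDimensionLT (Y := Y)
    { i := ModuleCat.ofHom i
      r := ModuleCat.ofHom p
      retract := by rw [← ModuleCat.ofHom_comp, h]; rfl } n

lemma projDimLE_iff_hasProjectiveDimensionLE [IsNoetherianRing Λ] (n : ℕ)
    (M : ModuleCat.{u} Λ) [Module.Finite Λ M] :
    ProjDimLE Λ n M ↔ HasProjectiveDimensionLE M n := by
  induction n generalizing M with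
  | zero =>
    rw [← projective_iff_hasProjectiveDimensionLE_zero]
    exact IsProjective.iff_projective M
  | succ n ih =>
    constructor
    · rintro ⟨P, g, hP, hPf, hg, hK⟩
      exact ((LinearMap.shortExact_shortComplexKer hg).hasProjectiveDimensionLT_X₃_iff n
        ((IsProjective.iff_projective P).1 hP)).2 ((ih _).1 hK)
    · intro h
      obtain ⟨m, g, hg⟩ := Module.Finite.exists_fin' Λ M
      have hP : Module.Projective Λ (Fin m → Λ) := inferInstance
      exact ⟨ModuleCat.of Λ (Fin m → Λ), g, hP, inferInstanceAs (Module.Finite Λ (Fin m → Λ)), hg,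
        (ih _).2 (((LinearMap.shortExact_shortComplexKer hg).hasProjectiveDimensionLT_X₃_iff n
          ((IsProjective.iff_projective (Fin m → Λ)).1 hP)).1 h)⟩

lemma exists_projDimLE_iff [IsNoetherianRing Λ] (M : ModuleCat.{u} Λ) [Module.Finite Λ M] :
    (∃ k, ProjDimLE Λ k M) ↔ ∃ k, HasProjectiveDimensionLT M k := by
  simp only [projDimLE_iff_hasProjectiveDimensionLE]
  exact ⟨fun ⟨k, hk⟩ => ⟨k + 1, hk⟩, fun ⟨k, hk⟩ => ⟨k, hasProjectiveDimensionLT_of_ge M k (k + 1) k.le_succ⟩⟩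

lemma hasProjectiveDimensionLT_prod {X Y : ModuleCat.{u} Λ} {n : ℕ}
    (hX : HasProjectiveDimensionLT X n) (hY : HasProjectiveDimensionLT Y n) :
    HasProjectiveDimensionLT (ModuleCat.of Λ (X × Y)) n :=
  hasProjectiveDimensionLT_of_iso (ModuleCat.biprodIsoProd X Y) n

end ProjectiveDimension

/-- A property of modules over a Noetherian and Artinian ring that holds for zero modules and for
finitely generated indecomposable modules, and passes to direct sums, holds for every finitely
generated module. -/
lemma induction_on_indecomposables {Λ : Type u} [Ring Λ] [IsNoetherianRing Λ] [IsArtinianRing Λ]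
    {C : ModuleCat.{u} Λ → Prop} (zero : ∀ M : ModuleCat.{u} Λ, Subsingleton M → C M)
    (indec : ∀ M : ModuleCat.{u} Λ, Module.Finite Λ M → ModIndec Λ M → C M)
    (sum : ∀ (M : ModuleCat.{u} Λ) (N₁ N₂ : Submodule Λ M), IsCompl N₁ N₂ →
      C (ModuleCat.of Λ N₁) → C (ModuleCat.of Λ N₂) → C M)
    (M : ModuleCat.{u} Λ) (hM : Module.Finite Λ M) : C M := by
  induction hl : Module.length Λ M using WellFoundedLT.induction generalizing M with
  | ind l ih =>
    subst hl
    rcases subsingleton_or_nontrivial M with h | h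
    · exact zero M h
    by_cases hi : ModIndec Λ M
    · exact indec M hM hi
    obtain ⟨N₁, N₂, hN, h₁, h₂⟩ : ∃ N₁ N₂ : Submodule Λ M, IsCompl N₁ N₂ ∧ N₁ ≠ ⊥ ∧ N₂ ≠ ⊥ := by
      simpa [ModIndec, h] using hi
    refine sum M N₁ N₂ hN (ih _ (Submodule.length_lt fun e => h₂ ?_) _ inferInstance rfl)
      (ih _ (Submodule.length_lt fun e => h₁ ?_) _ inferInstance rfl)
    · exact disjoint_top.1 (e ▸ hN.disjoint.symm)
    · exact disjoint_top.1 (e ▸ hN.disjoint)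

section RelativeTensor

variable {R : Type u} [CommRing R] {B A : Type u} [Ring B] [Ring A]
  [Algebra R B] [Algebra R A] (φ : B →ₐ[R] A)

/-- The unit `x ↦ 1 ⊗ x` of the induction-restriction adjunction. -/
noncomputable def relUnit (X : ModuleCat.{u} A) : X →+ relTensor φ X :=
  letI : Module R X := Module.compHom X (algebraMap R A)
  { toFun := fun x => Submodule.Quotient.mk ((1 : A) ⊗ₜ[R] x)
    map_zero' := by
      rw [TensorProduct.tmul_zero]
      rfl
    map_add' := fun x y => by
      rw [TensorProduct.tmul_add]
      rfl }

lemma relUnit_smul {X : ModuleCat.{u} A} (b : B) (x : X) :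
    relUnit φ X (φ b • x) = φ b • relUnit φ X x := by
  let : Module R X := Module.compHom X (algebraMap R A)
  refine Eq.symm ((Submodule.Quotient.eq _).2 (Submodule.subset_span ⟨1, b, x, ?_⟩))
  change (φ b * 1) ⊗ₜ[R] x - _ = _
  rw [mul_one, one_mul]

variable {φ} in
lemma relTensor_hom_ext {X Y : ModuleCat.{u} A} {F G : relTensor φ X →ₗ[A] Y}
    (h : ∀ x, F (relUnit φ X x) = G (relUnit φ X x)) : F = G := by
  let : Module R X := Module.compHom X (algebraMap R A)
  refine LinearMap.ext fun z => ?_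
  obtain ⟨w, rfl⟩ := Submodule.Quotient.mk_surjective _ z
  induction w with
  | zero => exact F.map_zero.trans G.map_zero.symm
  | add v w hv hw =>
    exact (F.map_add _ _).trans ((congrArg₂ _ hv hw).trans (G.map_add _ _).symm)
  | tmul a x =>
    have key : (Submodule.Quotient.mk (a ⊗ₜ[R] x) : relTensor φ X) = a • relUnit φ X x := by
      change _ = Submodule.Quotient.mk ((a * 1) ⊗ₜ[R] x)
      rw [mul_one]
    exact (congrArg F key).trans ((F.map_smul _ _).trans ((congrArg _ (h x)).trans
      ((G.map_smul _ _).symm.trans (congrArg G key).symm)))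

/-- A `B`-linear map `h` between `A`-modules induces the `A`-linear map `a ⊗ x ↦ a • h x`. -/
lemma exists_relTensor_lift {X Y : ModuleCat.{u} A} (h : X →+ Y)
    (hh : ∀ (b : B) (x : X), h (φ b • x) = φ b • h x) :
    ∃ F : relTensor φ X →ₗ[A] Y, ∀ x, F (relUnit φ X x) = h x := by
  let : Module R X := Module.compHom X (algebraMap R A)
  let : Module R Y := Module.compHom Y (algebraMap R A)
  have : IsScalarTower R A Y := ⟨fun r a y => by
    rw [Algebra.smul_def, mul_smul]
    rfl⟩
  let hR : X →ₗ[R] Y :=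
    { toFun := h
      map_add' := h.map_add
      map_smul' := fun r x => by
        change h (algebraMap R A r • x) = algebraMap R A r • h x
        rw [← φ.commutes r, hh] }
  let F : A ⊗[R] X →ₗ[A] Y := TensorProduct.AlgebraTensorModule.lift
    { toFun := fun a => a • hR
      map_add' := fun a b => add_smul a b hR
      map_smul' := fun a b => mul_smul a b hR }
  refine ⟨Submodule.liftQ _ F (Submodule.span_le.2 ?_), fun x => ?_⟩
  · rintro _ ⟨a, b, x, rfl⟩
    change F _ = 0
    rw [map_sub, sub_eq_zero]
    change (a * φ b) • h x = a • h (φ b • x)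
    rw [hh, mul_smul]
  · exact one_smul A (h x)

/-- The counit `a ⊗ x ↦ a • x` of the induction-restriction adjunction. -/
noncomputable def relCounit (X : ModuleCat.{u} A) : relTensor φ X →ₗ[A] X :=
  (exists_relTensor_lift φ (AddMonoidHom.id X) fun _ _ => rfl).choose

@[simp]
lemma relCounit_relUnit {X : ModuleCat.{u} A} (x : X) :
    relCounit φ X (relUnit φ X x) = x :=
  (exists_relTensor_lift φ (AddMonoidHom.id X) fun _ _ => rfl).choose_spec x

lemma relCounit_surjective (X : ModuleCat.{u} A) : Function.Surjective (relCounit φ X) :=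
  fun x => ⟨_, relCounit_relUnit φ x⟩

lemma finite_relTensor [Module.Finite R A] (X : ModuleCat.{u} A) [Module.Finite A X] :
    Module.Finite A (relTensor φ X) := by
  let : Module R X := Module.compHom X (algebraMap R A)
  have : IsScalarTower R A X := ⟨fun r a y => by
    rw [Algebra.smul_def, mul_smul]
    rfl⟩
  have : Module.Finite R X := Module.Finite.trans A X
  exact Module.Finite.of_surjective (Submodule.mkQ _) (Submodule.mkQ_surjective _)

lemma finite_resMod [Module.Finite R A] (X : ModuleCat.{u} A) [Module.Finite A X] :
    Module.Finite B (resMod φ X) := by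
  let : Module R X := Module.compHom X (algebraMap R A)
  have : IsScalarTower R A X := ⟨fun r a y => by
    rw [Algebra.smul_def, mul_smul]
    rfl⟩
  let : Module B X := Module.compHom X φ.toRingHom
  have : IsScalarTower R B X := ⟨fun r b y => by
    change φ (r • b) • y = algebraMap R A r • φ b • y
    rw [map_smul, Algebra.smul_def, mul_smul]⟩
  have : Module.Finite R X := Module.Finite.trans A X
  exact Module.Finite.of_restrictScalars_finite R B X

lemma RelProjective.exists_lift {P X : ModuleCat.{u} A} (hP : RelProjective φ P)
    (f : P →ₗ[A] X) : ∃ t : P →ₗ[A] relTensor φ X, ∀ x, relCounit φ X (t x) = f x := by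
  obtain ⟨i, p, hip⟩ := hP
  obtain ⟨F, hF⟩ := exists_relTensor_lift φ (Y := relTensor φ X)
    ((relUnit φ X).comp ((f.comp p).toAddMonoidHom.comp (relUnit φ P)))
    (fun b x => by simp [relUnit_smul])
  have key : (relCounit φ X).comp F = f.comp p := relTensor_hom_ext fun x => by simp [hF]
  refine ⟨F.comp i, fun x => (LinearMap.congr_fun key (i x)).trans ?_⟩
  exact congrArg f (LinearMap.congr_fun hip x)

lemma relProjective_relTensor (X : ModuleCat.{u} A) : RelProjective φ (relTensor φ X) := by
  obtain ⟨F, hF⟩ := exists_relTensor_lift φ (Y := relTensor φ (relTensor φ X))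
    ((relUnit φ _).comp (relUnit φ X)) (fun b x => by simp [relUnit_smul])
  exact ⟨F, relCounit φ _, relTensor_hom_ext fun x => by simp [hF]⟩

end RelativeTensor

section FinitisticDimension

open CategoryTheory

variable {R : Type u} [CommRing R] {B A : Type u} [Ring B] [Ring A]
  [Algebra R B] [Algebra R A] (φ : B →ₐ[R] A)

/-- If `A ⊗_B Z` has bounded projective dimension for a suitable `Z` containing any given
indecomposable `B`-summand of `X`, then `A ⊗_B X` satisfies the same bound. -/
lemma hasProjectiveDimensionLT_relTensor [IsNoetherianRing B] [IsArtinianRing B] {d : ℕ}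
    (X : ModuleCat.{u} A) (hX : Module.Finite B (resMod φ X))
    (H : ∀ M : ModuleCat.{u} B, Module.Finite B M → ModIndec B M →
      (∃ (i : M →ₗ[B] resMod φ X) (p : resMod φ X →ₗ[B] M), p.comp i = LinearMap.id) →
      ∃ Z : ModuleCat.{u} A, HasProjectiveDimensionLT (relTensor φ Z) d ∧
        ∃ (i : M →ₗ[B] resMod φ Z) (p : resMod φ Z →ₗ[B] M), p.comp i = LinearMap.id) :
    HasProjectiveDimensionLT (relTensor φ X) d := by
  suffices h : ∀ (i p : resMod φ X →ₗ[B] resMod φ X), p.comp i = LinearMap.id →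
      ∃ D : ModuleCat.{u} A, HasProjectiveDimensionLT D d ∧
        ∃ (s : relTensor φ X →ₗ[A] D) (t : D →ₗ[A] relTensor φ X),
          ∀ x : X, t (s (relUnit φ X x)) = relUnit φ X (i (p x)) by
    obtain ⟨D, hD, s, t, hst⟩ := h LinearMap.id LinearMap.id rfl
    exact hasProjectiveDimensionLT_of_comp_eq_id s t (relTensor_hom_ext hst) d
  refine induction_on_indecomposables (Λ := B)
    (C := fun M => ∀ (i : M →ₗ[B] resMod φ X) (p : resMod φ X →ₗ[B] M), p.comp i = LinearMap.id →
      ∃ D : ModuleCat.{u} A, HasProjectiveDimensionLT D d ∧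
        ∃ (s : relTensor φ X →ₗ[A] D) (t : D →ₗ[A] relTensor φ X),
          ∀ x : X, t (s (relUnit φ X x)) = relUnit φ X (i (p x))) ?_ ?_ ?_ (resMod φ X) hX
  · intro M hM i p _
    have h0 := (ModuleCat.isZero_of_subsingleton
      (ModuleCat.of A PUnit.{u + 1})).hasProjectiveDimensionLT_zero
    refine ⟨ModuleCat.of A PUnit.{u + 1}, hasProjectiveDimensionLT_of_ge _ 0 d d.zero_le, 0, 0,
      fun x => ?_⟩
    rw [Subsingleton.elim (p x) 0, i.map_zero]
    exact (map_zero (relUnit φ X)).symm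
  · intro M hM hMi i p hip
    obtain ⟨Z, hZ, j, q, hjq⟩ := H M hM hMi ⟨i, p, hip⟩
    obtain ⟨s, hs⟩ := exists_relTensor_lift φ (X := X) (Y := relTensor φ Z)
      ((relUnit φ Z).comp (j.comp p).toAddMonoidHom)
      (fun b x => (congrArg (relUnit φ Z) ((j.comp p).map_smul b x)).trans (relUnit_smul φ b _))
    obtain ⟨t, ht⟩ := exists_relTensor_lift φ (X := Z) (Y := relTensor φ X)
      ((relUnit φ X).comp (i.comp q).toAddMonoidHom)
      (fun b x => (congrArg (relUnit φ X) ((i.comp q).map_smul b x)).trans (relUnit_smul φ b _))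
    refine ⟨relTensor φ Z, hZ, s, t, fun x => ?_⟩
    rw [hs]
    refine (ht _).trans ?_
    exact congrArg (fun m => relUnit φ X (i m)) (LinearMap.congr_fun hjq (p x))
  · intro M N₁ N₂ hN h₁ h₂ i p hip
    have hip' : ∀ m, p (i m) = m := LinearMap.congr_fun hip
    obtain ⟨D₁, hD₁, s₁, t₁, hst₁⟩ := h₁ (i.comp N₁.subtype) ((N₁.projectionOnto N₂ hN).comp p)
      (LinearMap.ext fun m => by simp [hip'])
    obtain ⟨D₂, hD₂, s₂, t₂, hst₂⟩ := h₂ (i.comp N₂.subtype)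
      ((N₂.projectionOnto N₁ hN.symm).comp p) (LinearMap.ext fun m => by simp [hip'])
    refine ⟨ModuleCat.of A (D₁ × D₂), hasProjectiveDimensionLT_prod hD₁ hD₂, s₁.prod s₂,
      t₁.coprod t₂, fun x => ?_⟩
    refine (congrArg₂ (· + ·) (hst₁ x) (hst₂ x)).trans ?_
    refine ((relUnit φ X).map_add _ _).symm.trans (congrArg (relUnit φ X) ?_)
    refine (i.map_add _ _).symm.trans (congrArg i ?_)
    exact Submodule.projection_add_projection_eq_self hN (p x)

/-- Relative dimension shifting: a uniform bound for the modules `A ⊗_B X` together with a bound on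
the relative projective dimension gives a bound on the projective dimension. -/
lemma hasProjectiveDimensionLT_of_relProjDimLE [IsNoetherianRing A] [Module.Finite R A] {d : ℕ}
    (H : ∀ X : ModuleCat.{u} A, Module.Finite A X → (∃ k, HasProjectiveDimensionLT X k) →
      HasProjectiveDimensionLT (relTensor φ X) d) (n : ℕ)
    {W Y X : ModuleCat.{u} A} (hW : RelProjDimLE φ n W)
    (i₁ : X →ₗ[A] W) (i₂ : X →ₗ[A] relTensor φ Y) (p₁ : W →ₗ[A] X) (p₂ : relTensor φ Y →ₗ[A] X)
    (hip : ∀ x, p₁ (i₁ x) + p₂ (i₂ x) = x)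
    (hX : Module.Finite A X) (hXk : ∃ k, HasProjectiveDimensionLT X k) :
    HasProjectiveDimensionLT X (d + n) := by
  induction n generalizing W Y X with
  | zero =>
    have := H X hX hXk
    obtain ⟨t₁, ht₁⟩ := hW.exists_lift φ p₁
    obtain ⟨t₂, ht₂⟩ := (relProjective_relTensor φ Y).exists_lift φ p₂
    exact hasProjectiveDimensionLT_of_comp_eq_id (t₁.comp i₁ + t₂.comp i₂) (relCounit φ X)
      (LinearMap.ext fun x => by simp [ht₁, ht₂, hip]) d
  | succ n ih =>
    obtain ⟨P, g, hP, hPf, hg, ⟨h, hh, hgh⟩, hK⟩ := hW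
    have hgh' : ∀ w, g (h w) = w := fun w => by
      obtain ⟨p, rfl⟩ := hg w
      exact hgh p
    have hT := H X hX hXk
    have hTf := finite_relTensor φ X
    have hε := LinearMap.shortExact_shortComplexKer (relCounit_surjective φ X)
    obtain ⟨l, hl⟩ := exists_relTensor_lift φ (X := X) (Y := P) (h.comp i₁.toAddMonoidHom)
      (fun b x => by simp [hh])
    obtain ⟨t₁, ht₁⟩ := hP.exists_lift φ (p₁.comp g)
    obtain ⟨t₂, ht₂⟩ := (relProjective_relTensor φ Y).exists_lift φ p₂
    have hgl : ∀ z, g (l z) = i₁ (relCounit φ X z) :=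
      LinearMap.congr_fun (relTensor_hom_ext (F := g.comp l) (G := i₁.comp (relCounit φ X))
        fun x => by simp [hl, hgh'])
    refine hε.hasProjectiveDimensionLT_X₃ (d + n) ?_
      (hasProjectiveDimensionLT_of_ge _ d _ (by omega))
    have hlK : ∀ z : LinearMap.ker (relCounit φ X),
        (l.comp (LinearMap.ker (relCounit φ X)).subtype) z ∈ LinearMap.ker g := fun z => by
      simp [hgl, LinearMap.mem_ker.1 z.2]
    refine ih (X := ModuleCat.of A (LinearMap.ker (relCounit φ X))) (Y := X) hK
      (LinearMap.codRestrict _ (l.comp (LinearMap.ker (relCounit φ X)).subtype) hlK)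
      (LinearMap.ker (relCounit φ X)).subtype
      (LinearMap.codRestrict _ (t₁.comp (LinearMap.ker g).subtype) fun z => by
        simp [ht₁, LinearMap.mem_ker.1 z.2])
      (LinearMap.codRestrict _ (LinearMap.id - t₁.comp l
        - t₂.comp (i₂.comp (relCounit φ X))) fun z => by
          simp only [LinearMap.mem_ker, LinearMap.sub_apply, LinearMap.comp_apply, map_sub, ht₁,
            ht₂, hgl, LinearMap.id_apply]
          rw [sub_sub, hip, sub_self])
      (fun z => Subtype.ext ?_) inferInstance ?_
    · change t₁ (l z.1) + (z.1 - t₁ (l z.1) - t₂ (i₂ (relCounit φ X z.1))) = z.1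
      rw [LinearMap.mem_ker.1 z.2]
      simp
    · obtain ⟨k, hk⟩ := hXk
      exact ⟨max d k, hε.hasProjectiveDimensionLT_X₁ (max d k)
        (hasProjectiveDimensionLT_of_ge _ d _ (by omega))
        (hasProjectiveDimensionLT_of_ge X k _ (by omega))⟩

end FinitisticDimension

variable {R : Type u} [CommRing R] [IsArtinianRing R]
  {B A : Type u} [Ring B] [Ring A] [Algebra R B] [Algebra R A]
  [Module.Finite R B] [Module.Finite R A]

/-- If `B` is representation-finite, `2 ≤ fd(φ) < ∞`, and `A ⊗_B X` has finite
projective dimension for every f.g. `A`-module `X` of finite projective dimension, then the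
finitistic dimension of `A` is finite. -/
theorem statement1 (φ : B →ₐ[R] A)
    (hB : RepFinite B)
    (hfd_lt_top : ∃ n : ℕ, ∀ X : ModuleCat.{u} A, Module.Finite A X →
      (∃ k : ℕ, ProjDimLE A k X) → RelProjDimLE φ n X)
    (hfd_ge_two : ∃ X : ModuleCat.{u} A, Module.Finite A X ∧
      (∃ k : ℕ, ProjDimLE A k X) ∧ ¬ RelProjDimLE φ 1 X)
    (htensor : ∀ X : ModuleCat.{u} A, Module.Finite A X → (∃ k : ℕ, ProjDimLE A k X) →
      ∃ k : ℕ, ProjDimLE A k (relTensor φ X)) :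
    FinFinDim A := by
  have : IsNoetherianRing A := IsNoetherianRing.of_finite R A
  have : IsNoetherianRing B := IsNoetherianRing.of_finite R B
  have : IsArtinianRing B := IsArtinianRing.of_finite R B
  obtain ⟨m, N, hN⟩ := hB
  obtain ⟨n, hn⟩ := hfd_lt_top
  let Good (X : ModuleCat.{u} A) : Prop := Module.Finite A X ∧ ∃ k, ProjDimLE A k X
  let Summand (M : ModuleCat.{u} B) (X : ModuleCat.{u} A) : Prop :=
    ∃ (i : M →ₗ[B] resMod φ X) (p : resMod φ X →ₗ[B] M), p.comp i = LinearMap.id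
  have bound (j : Fin m) : ∃ d, (∃ X, Good X ∧ Summand (N j) X) → ∃ Z,
      CategoryTheory.HasProjectiveDimensionLT (relTensor φ Z) d ∧ Summand (N j) Z := by
    by_cases h : ∃ X, Good X ∧ Summand (N j) X
    · obtain ⟨X, ⟨hX, hXk⟩, hNX⟩ := h
      have := finite_relTensor φ X
      obtain ⟨d, hd⟩ := (exists_projDimLE_iff _).1 (htensor X hX hXk)
      exact ⟨d, fun _ => ⟨X, hd, hNX⟩⟩
    · exact ⟨0, fun h' => absurd h' h⟩
  choose d hd using bound
  have uniform (X : ModuleCat.{u} A) (hX : Module.Finite A X)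
      (hXk : ∃ k, CategoryTheory.HasProjectiveDimensionLT X k) :
      CategoryTheory.HasProjectiveDimensionLT (relTensor φ X) (Finset.univ.sup d) := by
    refine hasProjectiveDimensionLT_relTensor φ X (finite_resMod φ X) fun M hM hMi ⟨i, p, hip⟩ => ?_
    obtain ⟨j, ⟨e⟩⟩ := hN M hM hMi
    obtain ⟨Z, hZ, i', p', hip'⟩ := hd j ⟨X, ⟨hX, (exists_projDimLE_iff X).2 hXk⟩,
      i.comp e.symm.toLinearMap, e.toLinearMap.comp p,
      LinearMap.ext fun y => by simpa using congrArg e (LinearMap.congr_fun hip (e.symm y))⟩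
    refine ⟨Z, CategoryTheory.hasProjectiveDimensionLT_of_ge _ (d j) _
      (Finset.le_sup (Finset.mem_univ j)), i'.comp e.toLinearMap, e.symm.toLinearMap.comp p',
      LinearMap.ext fun y => by simpa using congrArg e.symm (LinearMap.congr_fun hip' (e y))⟩
  refine ⟨Finset.univ.sup d + n, fun X hX hXk => (projDimLE_iff_hasProjectiveDimensionLE _ X).2 ?_⟩
  have := hasProjectiveDimensionLT_of_relProjDimLE φ uniform n (Y := X) (hn X hX hXk)
    LinearMap.id 0 LinearMap.id 0 (fun x => by simp) hX ((exists_projDimLE_iff X).1 hXk)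
  exact CategoryTheory.hasProjectiveDimensionLT_of_ge X _ _ (Nat.le_succ _)
end
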